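/- For each k ≥ 2 there exists a positive constant c such that for any prime power q and multiplicative subgroup A of the finite field F_q of size |A| = d ≥ c·q^{6/7} if k = 2, or d ≥ c·q^{(3k+1)/(3k+2)} if k ≥ 3, there is a cyclic ordering a_0, a_1, …, a_{d−1} of the elements of A such that a_i + a_{i+j} ∈ A for all i and all 1 ≤ j ≤ k (indices mod d). -/

import Mathlib

open scoped Classical

/-- Number of edges of `G` with one endpoint in `A` and the other in `B`. -/
noncomputable def eBetween {V : Type*} (G : SimpleGraph V) (A B : Finset V) : ℕ :=
  ((A ×ˢ B).filter fun e => G.Adj e.1 e.2).card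

/-- `G` is `(ε,p,k,ℓ)`-pseudorandom. -/
def Pseudorandom {V : Type*} [Fintype V] (G : SimpleGraph V) (ε p : ℝ) (k l : ℕ) : Prop :=
  ∀ X Y : Finset V, Disjoint X Y →
    ε * p ^ k * (Fintype.card V : ℝ) ≤ (X.card : ℝ) →
    ε * p ^ l * (Fintype.card V : ℝ) ≤ (Y.card : ℝ) →
    |(eBetween G X Y : ℝ) - p * X.card * Y.card| < ε * p * X.card * Y.card

/-
Order `A` as the geometric progression `a i = g ^ i` of a generator `g`: then
`a i + a (i + j) = g ^ i * (1 + g ^ j)`, so it suffices that `1 + g ^ j ∈ A` for `1 ≤ j ≤ k`, and by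
Frobenius only the `j` prime to the characteristic matter. The number of such `g` is a character
sum: expanding the indicator of `A` and of its generators into multiplicative characters gives the
main term, and the nontrivial character tuples contribute `O(√q)` each by Weil's bound for
`∑ x, ∏ j, χ j (1 + x ^ j)`, the generator condition costing only a factor `2 ^ ω(|A|)`.

Weil's bound comes from Stepanov's method. In a large extension of `F` of even degree, the points at
which given `m`-th power residue symbols take prescribed values are bounded by a polynomial
vanishing there to high order. It is nonzero because products of `m`-th roots of linear factors are
linearly independent (Kummer theory) with an effective degree bound. This bounds the character sums
over these extensions; they are power sums of the reciprocal roots of an `L`-polynomial, so all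
these roots have absolute value at most `√q`.
-/

section ZeroEstimate

open Polynomial

section Kummer

variable {K L : Type*} [Field K] [Field L] [Algebra K L] {m : ℕ} [NeZero m] {ζ : K}

theorem exists_monoidHom_apply_eq_div (hζ : IsPrimitiveRoot ζ m) {y : L} (hy : y ≠ 0)
    (hym : y ^ m ∈ Set.range (algebraMap K L)) :
    ∃ χ : (L ≃ₐ[K] L) →* L, ∀ σ, χ σ = σ y / y := by
  obtain ⟨u, hu⟩ := hym
  have fixed_root (σ : L ≃ₐ[K] L) : ∃ z : K, algebraMap K L z = σ y / y := by
    have hpow : (σ y / y) ^ m = 1 := by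
      rw [div_pow, ← map_pow, ← hu, AlgEquiv.commutes, hu, div_self (pow_ne_zero _ hy)]
    obtain ⟨i, -, hi⟩ :=
      (hζ.map_of_injective (algebraMap K L).injective).eq_pow_of_pow_eq_one hpow
    exact ⟨ζ ^ i, by rw [map_pow, hi]⟩
  refine ⟨{ toFun := fun σ => σ y / y
            map_one' := by simp [hy]
            map_mul' := fun σ τ => ?_ }, fun σ => rfl⟩
  obtain ⟨z, hz⟩ := fixed_root τ
  have hτ : τ y = algebraMap K L z * y := by rw [hz, div_mul_cancel₀ _ hy]
  rw [AlgEquiv.mul_apply, hτ, map_mul, AlgEquiv.commutes]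
  field_simp

theorem div_mem_range_algebraMap [IsGalois K L] {y y' : L} (hy : y ≠ 0) (hy' : y' ≠ 0)
    (h : ∀ σ : L ≃ₐ[K] L, σ y / y = σ y' / y') : y / y' ∈ Set.range (algebraMap K L) := by
  rw [← IntermediateField.mem_bot, InfiniteGalois.mem_bot_iff_fixed]
  intro σ
  have hσ : σ y' ≠ 0 := by simpa using hy'
  have hσy := h σ
  rw [map_div₀]
  field_simp at hσy ⊢
  rw [hσy, mul_comm]

/-- The maps `σ ↦ σ y / y` are characters of the Galois group, so Dedekind's independence of
characters applies. -/
theorem linearIndependent_of_pow_mem_range [IsGalois K L] {κ : Type*} (hζ : IsPrimitiveRoot ζ m)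
    {y : κ → L} (hy : ∀ j, y j ≠ 0) (hym : ∀ j, y j ^ m ∈ Set.range (algebraMap K L))
    (hinj : ∀ j j', y j / y j' ∈ Set.range (algebraMap K L) → j = j') :
    LinearIndependent K y := by
  choose χ hχ using fun j => exists_monoidHom_apply_eq_div hζ (hy j) (hym j)
  have hχ_inj : Function.Injective χ := fun j j' h =>
    hinj j j' (div_mem_range_algebraMap (hy j) (hy j') fun σ => by rw [← hχ, ← hχ, h])
  have hli := (linearIndependent_monoidHom (L ≃ₐ[K] L) L).comp χ hχ_inj
  rw [linearIndependent_iff'] at hli ⊢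
  intro s g hg j hj
  have hzero : ∑ j ∈ s, (algebraMap K L (g j) * y j) • (χ j : (L ≃ₐ[K] L) → L) = 0 := by
    ext σ
    have hσ := congrArg σ hg
    rw [map_sum, map_zero] at hσ
    rw [Finset.sum_apply, Pi.zero_apply, ← hσ]
    refine Finset.sum_congr rfl fun i _ => ?_
    rw [Pi.smul_apply, hχ, smul_eq_mul, Algebra.smul_def, map_mul, AlgEquiv.commutes]
    field_simp [hy i]
  simpa [hy j] using hli s _ hzero j hj

end Kummer

section RadicalMonomials

variable {E ι : Type*} [Field E] [Fintype ι] {b c : ι → E} {m : ℕ}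

theorem rootMultiplicity_prod_X_sub_C_pow (hb : Function.Injective b) (n : ι → ℕ) (i : ι) :
    (∏ j, (X - C (b j)) ^ n j).rootMultiplicity (b i) = n i := by
  rw [← count_roots, roots_prod]
  · simp only [roots_pow, roots_X_sub_C, Multiset.count_bind]
    simp [Multiset.count_nsmul, Multiset.count_singleton, hb.eq_iff, Finset.sum_ite_eq]
  · exact Finset.prod_ne_zero_iff.2 fun j _ => pow_ne_zero _ (X_sub_C_ne_zero _)

theorem rootMultiplicity_C_mul_pow_mul_prod_mod (hb : Function.Injective b) {α : E} (hα : α ≠ 0)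
    {p : E[X]} (hp : p ≠ 0) (e : ι → Fin m) (i : ι) :
    (C α * (p ^ m * ∏ j, (X - C (b j)) ^ (e j : ℕ))).rootMultiplicity (b i) % m = e i := by
  have hprod : ∏ j, (X - C (b j)) ^ (e j : ℕ) ≠ 0 :=
    Finset.prod_ne_zero_iff.2 fun j _ => pow_ne_zero _ (X_sub_C_ne_zero _)
  have hpm := mul_ne_zero (pow_ne_zero m hp) hprod
  rw [rootMultiplicity_mul (mul_ne_zero (C_ne_zero.2 hα) hpm), rootMultiplicity_mul hpm,
    rootMultiplicity_C, rootMultiplicity_prod_X_sub_C_pow hb fun j => (e j : ℕ), ← count_roots,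
    roots_pow, Multiset.count_nsmul, zero_add, Nat.mul_add_mod, Nat.mod_eq_of_lt (e i).2]

theorem eq_of_mul_prod_pow_eq (hb : Function.Injective b) (hc : ∀ i, c i ≠ 0) {S : Type*}
    [CommRing S] {φ : E[X] →+* S} (hφ : Function.Injective φ) {y : ι → S}
    (hy : ∀ i, y i ^ m * φ (X - C (b i)) = φ (C (c i))) {e e' : ι → Fin m} {p q : E[X]}
    (hp : p ≠ 0) (hq : q ≠ 0)
    (h : φ q * ∏ i, y i ^ (e i : ℕ) = φ p * ∏ i, y i ^ (e' i : ℕ)) : e = e' := by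
  have hpow (f : ι → Fin m) : (∏ i, y i ^ (f i : ℕ)) ^ m * φ (∏ i, (X - C (b i)) ^ (f i : ℕ)) =
      φ (C (∏ i, c i ^ (f i : ℕ))) := by
    simp only [map_prod, map_pow, ← hy, mul_pow, Finset.prod_mul_distrib, ← Finset.prod_pow]
    congr 1
    exact Finset.prod_congr rfl fun i _ => pow_right_comm _ _ _
  have hC (f : ι → Fin m) : ∏ i, c i ^ (f i : ℕ) ≠ 0 :=
    Finset.prod_ne_zero_iff.2 fun i _ => pow_ne_zero _ (hc i)
  have key : C (∏ i, c i ^ (e i : ℕ)) * (q ^ m * ∏ i, (X - C (b i)) ^ (e' i : ℕ)) =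
      C (∏ i, c i ^ (e' i : ℕ)) * (p ^ m * ∏ i, (X - C (b i)) ^ (e i : ℕ)) := by
    apply hφ
    have hm := congrArg (· ^ m) h
    simp only [mul_pow] at hm
    simp only [map_mul φ (C _), ← hpow, map_mul φ (_ ^ m), map_pow φ _ m]
    linear_combination
      φ (∏ i, (X - C (b i)) ^ (e i : ℕ)) * φ (∏ i, (X - C (b i)) ^ (e' i : ℕ)) * hm
  funext i
  have hmod := congrArg (fun P => P.rootMultiplicity (b i) % m) key
  simp only [rootMultiplicity_C_mul_pow_mul_prod_mod hb (hC _) hp,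
    rootMultiplicity_C_mul_pow_mul_prod_mod hb (hC _) hq] at hmod
  exact Fin.ext hmod.symm

end RadicalMonomials

section MulMatrix

variable {E ι : Type*} [Field E] [Fintype ι] {m : ℕ}

/-- The structure constants of the monomials `∏ i, y i ^ e i`, `e i < m`, in radicals
`y i ^ m = c i / (X - b i)`: the product of the `e`-th and the `f`-th monomial is the `(e + f)`-th
one (exponents modulo `m`) times `carryFactor b c e f / ∏ i, (X - b i)`. -/
noncomputable def carryFactor (b c : ι → E) (e f : ι → Fin m) : E[X] :=
  ∏ i, if (e i : ℕ) + (f i : ℕ) < m then X - C (b i) else C (c i)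

/-- The matrix, in the basis of the monomials `∏ i, y i ^ e i`, of multiplication by
`(∏ i, (X - b i)) * ∑ e, k e * ∏ i, y i ^ e i`, where `y i ^ m = c i / (X - b i)`. -/
noncomputable def monomialMulMatrix (b c : ι → E) [NeZero m] (k : (ι → Fin m) → E[X]) :
    Matrix (ι → Fin m) (ι → Fin m) E[X] :=
  Matrix.of fun e f => carryFactor b c e (f - e) * k (f - e)

theorem natDegree_carryFactor_le (b c : ι → E) (e f : ι → Fin m) :
    (carryFactor b c e f).natDegree ≤ Fintype.card ι := by
  refine (natDegree_prod_le _ _).trans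
    ((Finset.sum_le_card_nsmul _ _ 1 fun i _ => ?_).trans (by simp))
  split_ifs <;> simp

theorem natDegree_det_le_card_mul {R n : Type*} [CommRing R] [Fintype n] [DecidableEq n]
    {M : Matrix n n R[X]} {D : ℕ} (h : ∀ i j, (M i j).natDegree ≤ D) :
    M.det.natDegree ≤ Fintype.card n * D := by
  rw [Matrix.det_apply]
  refine natDegree_sum_le_of_forall_le _ _ fun σ _ =>
    (natDegree_smul_le _ _).trans ((natDegree_prod_le _ _).trans ?_)
  exact (Finset.sum_le_card_nsmul _ _ D fun i _ => h _ _).trans (by simp)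

variable {S : Type*} [CommRing S] {φ : E[X] →+* S} {b c : ι → E} {y : ι → S}

theorem map_prod_mul_monomial_mul_monomial (hy : ∀ i, y i ^ m * φ (X - C (b i)) = φ (C (c i)))
    [NeZero m] (e f : ι → Fin m) :
    φ (∏ i, (X - C (b i))) * ((∏ i, y i ^ (e i : ℕ)) * ∏ i, y i ^ (f i : ℕ)) =
      φ (carryFactor b c e f) * ∏ i, y i ^ ((e + f) i : ℕ) := by
  rw [carryFactor, map_prod, map_prod, ← Finset.prod_mul_distrib, ← Finset.prod_mul_distrib,
    ← Finset.prod_mul_distrib]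
  refine Finset.prod_congr rfl fun i _ => ?_
  rw [Pi.add_apply, Fin.val_add, ← pow_add]
  split_ifs with hlt
  · rw [Nat.mod_eq_of_lt hlt]
  · have := (e i).2
    have := (f i).2
    have hcarry : (e i : ℕ) + f i = m + (e i + f i - m) := by omega
    rw [Nat.mod_eq_sub_mod (not_lt.1 hlt), Nat.mod_eq_of_lt (by omega), ← hy i]
    conv_lhs => rw [hcarry, pow_add]
    ring

variable [NeZero m]

theorem sum_map_monomialMulMatrix_mul (k : (ι → Fin m) → E[X])
    (hy : ∀ i, y i ^ m * φ (X - C (b i)) = φ (C (c i))) (e : ι → Fin m) :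
    ∑ f, φ (monomialMulMatrix b c k e f) * ∏ i, y i ^ (f i : ℕ) =
      (φ (∏ i, (X - C (b i))) * ∑ f, φ (k f) * ∏ i, y i ^ (f i : ℕ)) *
        ∏ i, y i ^ (e i : ℕ) := by
  rw [Finset.mul_sum, Finset.sum_mul, ← Equiv.sum_comp (Equiv.addLeft e)]
  refine Finset.sum_congr rfl fun f _ => ?_
  have hmul := map_prod_mul_monomial_mul_monomial hy e f
  simp only [monomialMulMatrix, Matrix.of_apply, Equiv.coe_addLeft, add_sub_cancel_left, map_mul]
  linear_combination (-φ (k f)) * hmul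

theorem natDegree_det_monomialMulMatrix_le (b c : ι → E) {k : (ι → Fin m) → E[X]} {K : ℕ}
    (hk : ∀ e, (k e).natDegree ≤ K) :
    (monomialMulMatrix b c k).det.natDegree ≤ m ^ Fintype.card ι * (K + Fintype.card ι) := by
  refine (natDegree_det_le_card_mul (D := K + Fintype.card ι) fun e f => ?_).trans_eq
    (by rw [Fintype.card_fun, Fintype.card_fin])
  rw [monomialMulMatrix, Matrix.of_apply, add_comm K]
  exact natDegree_mul_le.trans (add_le_add (natDegree_carryFactor_le b c e (f - e)) (hk (f - e)))

end MulMatrix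

section

theorem det_eq_zero_of_mulVec_eq_zero_of_eq_one {S n : Type*} [CommRing S] [Fintype n]
    [DecidableEq n] {A : Matrix n n S} {v : n → S} (h : A.mulVec v = 0) {j : n} (hj : v j = 1) :
    A.det = 0 := by
  have hadj : A.adjugate.mulVec (A.mulVec v) = 0 := by rw [h, Matrix.mulVec_zero]
  rw [Matrix.mulVec_mulVec, Matrix.adjugate_mul, Matrix.smul_mulVec, Matrix.one_mulVec] at hadj
  simpa [hj] using congrFun hadj j

theorem det_ne_zero_of_sum_map_mul_eq {R S n : Type*} [CommRing R] [IsDomain R] [CommRing S]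
    [IsDomain S] [Fintype n] [DecidableEq n] {φ : R →+* S} {y : n → S}
    (hli : ∀ v : n → R, ∑ e, φ (v e) * y e = 0 → v = 0) {A : Matrix n n R} {z : S} (hz : z ≠ 0)
    (hA : ∀ e, ∑ f, φ (A e f) * y f = z * y e) : A.det ≠ 0 := by
  intro hdet
  obtain ⟨v, hv0, hv⟩ := Matrix.exists_vecMul_eq_zero_iff.2 hdet
  refine hv0 (hli v ((mul_eq_zero.1 ?_).resolve_left hz))
  calc z * ∑ e, φ (v e) * y e = ∑ e, φ (v e) * ∑ f, φ (A e f) * y f := by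
        simp only [hA, Finset.mul_sum, mul_left_comm]
    _ = ∑ f, φ (Matrix.vecMul v A f) * y f := by
        simp only [Finset.mul_sum, Matrix.vecMul, dotProduct, map_sum, Finset.sum_mul, map_mul]
        rw [Finset.sum_comm]
        simp only [mul_assoc]
    _ = 0 := by simp [hv]

variable {E ι : Type*} [Field E] [Fintype ι] {b c : ι → E} {m : ℕ} [NeZero m]

theorem dvd_det_monomialMulMatrix {g : E[X]} {w : ι → E[X]}
    (hw : ∀ i, g ∣ w i ^ m * (X - C (b i)) - C (c i)) {k : (ι → Fin m) → E[X]}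
    (hdvd : g ∣ ∑ e, k e * ∏ i, w i ^ (e i : ℕ)) : g ∣ (monomialMulMatrix b c k).det := by
  let φ := Ideal.Quotient.mk (Ideal.span {g})
  have hφ (p : E[X]) : φ p = 0 ↔ g ∣ p := by
    rw [Ideal.Quotient.eq_zero_iff_mem, Ideal.mem_span_singleton]
  have hy (i : ι) : φ (w i) ^ m * φ (X - C (b i)) = φ (C (c i)) := by
    rw [← map_pow, ← map_mul, ← sub_eq_zero, ← map_sub, hφ]
    exact hw i
  have hk : ∑ f, φ (k f) * ∏ i, φ (w i) ^ (f i : ℕ) = 0 := by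
    rw [← (hφ _).2 hdvd, map_sum]
    simp only [map_mul, map_prod, map_pow]
  rw [← hφ, RingHom.map_det]
  refine det_eq_zero_of_mulVec_eq_zero_of_eq_one
    (v := fun f : ι → Fin m => ∏ i, φ (w i) ^ (f i : ℕ)) (j := 0) ?_ (by simp)
  funext e
  refine (sum_map_monomialMulMatrix_mul k hy e).trans ?_
  rw [hk, mul_zero, zero_mul, Pi.zero_apply]

section

variable {R L : Type*} [Field R] [Algebra E[X] R] [IsFractionRing E[X] R] [Field L] [Algebra R L]
  [IsGalois R L] [Algebra E[X] L] [IsScalarTower E[X] R L]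

theorem injective_algebraMap_polynomial (E R L : Type*) [Field E] [Field R] [Algebra E[X] R]
    [IsFractionRing E[X] R] [Field L] [Algebra R L] [Algebra E[X] L] [IsScalarTower E[X] R L] :
    Function.Injective (algebraMap E[X] L) := by
  rw [IsScalarTower.algebraMap_eq E[X] R L]
  exact (algebraMap R L).injective.comp (IsFractionRing.injective _ _)

theorem linearIndependent_radical_monomials (hb : Function.Injective b) (hc : ∀ i, c i ≠ 0) {ζ : R}
    (hζ : IsPrimitiveRoot ζ m) {y : ι → L}
    (hy : ∀ i, y i ^ m * algebraMap E[X] L (X - C (b i)) = algebraMap E[X] L (C (c i))) :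
    LinearIndependent R fun e : ι → Fin m => ∏ i, y i ^ (e i : ℕ) := by
  have hL := injective_algebraMap_polynomial E R L
  have hy0 (i : ι) : y i ≠ 0 := by
    intro h
    have hi := hy i
    rw [h, zero_pow (NeZero.ne m), zero_mul, eq_comm, map_eq_zero_iff _ hL] at hi
    exact hc i (C_eq_zero.1 hi)
  have hY0 (e : ι → Fin m) : ∏ i, y i ^ (e i : ℕ) ≠ 0 :=
    Finset.prod_ne_zero_iff.2 fun i _ => pow_ne_zero _ (hy0 i)
  refine linearIndependent_of_pow_mem_range hζ hY0 (fun e => ?_) fun e e' => ?_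
  · refine ⟨∏ i, (algebraMap E[X] R (C (c i)) / algebraMap E[X] R (X - C (b i))) ^ (e i : ℕ), ?_⟩
    simp only [map_prod, map_pow, map_div₀, ← IsScalarTower.algebraMap_apply, ← Finset.prod_pow]
    refine Finset.prod_congr rfl fun i _ => ?_
    rw [← hy i, mul_div_cancel_right₀ _ ((map_ne_zero_iff _ hL).2 (X_sub_C_ne_zero _)),
      pow_right_comm]
  · rintro ⟨z, hz⟩
    obtain ⟨p, q, hq, rfl⟩ := IsFractionRing.div_surjective (A := E[X]) z
    have hq0 : q ≠ 0 := nonZeroDivisors.ne_zero hq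
    have hp0 : p ≠ 0 := by
      rintro rfl
      rw [map_zero, zero_div, map_zero] at hz
      exact div_ne_zero (hY0 e) (hY0 e') hz.symm
    have hq1 : algebraMap E[X] L q ≠ 0 := (map_ne_zero_iff _ hL).2 hq0
    rw [map_div₀, ← IsScalarTower.algebraMap_apply, ← IsScalarTower.algebraMap_apply,
      div_eq_div_iff hq1 (hY0 e')] at hz
    exact eq_of_mul_prod_pow_eq hb hc hL hy hp0 hq0 ((mul_comm _ _).trans hz.symm)

theorem exists_linearIndependent_radical_monomials [IsSepClosed L] (hb : Function.Injective b)
    (hc : ∀ i, c i ≠ 0) {ζ : R} (hζ : IsPrimitiveRoot ζ m) :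
    ∃ y : ι → L, (∀ i, y i ^ m * algebraMap E[X] L (X - C (b i)) = algebraMap E[X] L (C (c i))) ∧
      LinearIndependent R fun e : ι → Fin m => ∏ i, y i ^ (e i : ℕ) := by
  have hL := injective_algebraMap_polynomial E R L
  have : NeZero (m : L) := (hζ.map_of_injective (algebraMap R L).injective).neZero'
  choose y hy using fun i => IsSepClosed.exists_pow_nat_eq
    (algebraMap E[X] L (C (c i)) / algebraMap E[X] L (X - C (b i))) m
  have hyφ (i : ι) : y i ^ m * algebraMap E[X] L (X - C (b i)) = algebraMap E[X] L (C (c i)) := by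
    rw [hy i, div_mul_cancel₀ _ ((map_ne_zero_iff _ hL).2 (X_sub_C_ne_zero _))]
  exact ⟨y, hyφ, linearIndependent_radical_monomials hb hc hζ hyφ⟩

end

/-- The combination is nonzero in a field of radicals; the determinant of the multiplication by it
is then a nonzero polynomial of small degree which `g` divides. -/
theorem eq_zero_of_dvd_sum_monomials [IsAlgClosed E] (hb : Function.Injective b)
    (hc : ∀ i, c i ≠ 0) (hm : (m : E) ≠ 0) {g : E[X]} {w : ι → E[X]}
    (hw : ∀ i, g ∣ w i ^ m * (X - C (b i)) - C (c i))
    {k : (ι → Fin m) → E[X]} {K : ℕ} (hk : ∀ e, (k e).natDegree ≤ K)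
    (hK : m ^ Fintype.card ι * (K + Fintype.card ι) < g.natDegree)
    (hdvd : g ∣ ∑ e, k e * ∏ i, w i ^ (e i : ℕ)) : k = 0 := by
  have : NeZero (m : E) := ⟨hm⟩
  obtain ⟨ζ, hζ⟩ := HasEnoughRootsOfUnity.exists_primitiveRoot E m
  let R := RatFunc E
  let L := SeparableClosure R
  have hR : Function.Injective (algebraMap E[X] R) := RatFunc.algebraMap_injective E
  have hL := injective_algebraMap_polynomial E R L
  obtain ⟨y, hy, hli⟩ := exists_linearIndependent_radical_monomials (L := L) hb hc
    (hζ.map_of_injective (algebraMap E R).injective)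
  have hli (v : (ι → Fin m) → E[X])
      (hv : ∑ e, algebraMap E[X] L (v e) * ∏ i, y i ^ (e i : ℕ) = 0) : v = 0 := by
    refine funext (Fintype.linearIndependent_iff.1 (hli.restrict_scalars (R := E[X]) ?_) v ?_)
    · simpa only [Algebra.smul_def, mul_one] using hR
    · exact (Finset.sum_congr rfl fun e _ => Algebra.smul_def _ _).trans hv
  by_contra hk0
  have hprod : algebraMap E[X] L (∏ i, (X - C (b i))) ≠ 0 :=
    (map_ne_zero_iff _ hL).2 (Finset.prod_ne_zero_iff.2 fun i _ => X_sub_C_ne_zero _)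
  have hdet : (monomialMulMatrix b c k).det ≠ 0 :=
    det_ne_zero_of_sum_map_mul_eq hli (mul_ne_zero hprod fun h => hk0 (hli k h))
      (sum_map_monomialMulMatrix_mul k hy)
  exact absurd (natDegree_le_of_dvd (dvd_det_monomialMulMatrix hw hdvd) hdet)
    (not_le.2 ((natDegree_det_monomialMulMatrix_le b c hk).trans_lt hK))

end

end ZeroEstimate

section Stepanov

open Polynomial

section HasseDeriv

variable {R : Type*} [CommRing R] {h U V : R[X]}

theorem mul_dvd_pow_mul_hasseDeriv_mul (hU : ∀ c, U ∣ h ^ c * hasseDeriv c U)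
    (hV : ∀ c, V ∣ h ^ c * hasseDeriv c V) (c : ℕ) :
    U * V ∣ h ^ c * hasseDeriv c (U * V) := by
  rw [hasseDeriv_mul, Finset.mul_sum]
  refine Finset.dvd_sum fun ij hij => ?_
  rw [← Finset.HasAntidiagonal.mem_antidiagonal.1 hij, pow_add, mul_mul_mul_comm]
  exact mul_dvd_mul (hU _) (hV _)

theorem pow_dvd_pow_mul_hasseDeriv_pow (hU : U ∣ h) (n c : ℕ) :
    U ^ n ∣ h ^ c * hasseDeriv c (U ^ n) := by
  induction n generalizing c with
  | zero => simp
  | succ n ih =>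
    rw [pow_succ]
    refine mul_dvd_pow_mul_hasseDeriv_mul ih (fun c => ?_) c
    rcases c.eq_zero_or_pos with rfl | hc
    · simp
    · exact (hU.trans (dvd_pow_self _ hc.ne')).mul_right _

theorem prod_pow_dvd_pow_mul_hasseDeriv {ι : Type*} (s : Finset ι) (U : ι → R[X]) (n : ι → ℕ)
    (hU : ∀ i ∈ s, U i ∣ h) (c : ℕ) :
    ∏ i ∈ s, U i ^ n i ∣ h ^ c * hasseDeriv c (∏ i ∈ s, U i ^ n i) := by
  induction s using Finset.induction_on generalizing c with
  | empty => simp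
  | insert i s hi ih =>
    rw [Finset.prod_insert hi]
    rw [Finset.forall_mem_insert] at hU
    exact mul_dvd_pow_mul_hasseDeriv_mul (pow_dvd_pow_mul_hasseDeriv_pow hU.1 _) (ih hU.2) c

theorem exists_pow_mul_hasseDeriv_prod_eq [IsDomain R] {ι : Type*} [Fintype ι] (b : ι → R)
    (n : ι → ℕ) {M c : ℕ} (hc : c ≤ M) : ∃ G : R[X], G.natDegree ≤ Fintype.card ι * M ∧
      (∏ i, (X - C (b i))) ^ M * hasseDeriv c (∏ i, (X - C (b i)) ^ n i) =
        (∏ i, (X - C (b i)) ^ n i) * G := by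
  have hmonic : (∏ i, (X - C (b i))).Monic := monic_prod_of_monic _ _ fun i _ => monic_X_sub_C _
  have hmonic_pow : (∏ i, (X - C (b i)) ^ n i).Monic :=
    monic_prod_of_monic _ _ fun i _ => (monic_X_sub_C _).pow _
  obtain ⟨G, hG⟩ := (prod_pow_dvd_pow_mul_hasseDeriv Finset.univ (fun i => X - C (b i)) n
    (fun i hi => Finset.dvd_prod_of_mem (fun i => X - C (b i)) hi) c).mul_left
      ((∏ i, (X - C (b i))) ^ (M - c))
  rw [← mul_assoc, ← pow_add, Nat.sub_add_cancel hc] at hG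
  refine ⟨G, ?_, hG⟩
  rcases eq_or_ne G 0 with rfl | hG0
  · simp
  have hdeg := congrArg natDegree hG
  rw [hmonic_pow.natDegree_mul' hG0, (hmonic.pow M).natDegree_mul', hmonic.natDegree_pow,
    natDegree_prod_of_monic _ _ fun i _ => monic_X_sub_C _] at hdeg
  · have hle := natDegree_hasseDeriv_le (∏ i, (X - C (b i)) ^ n i) c
    simp only [natDegree_X_sub_C, Finset.sum_const, smul_eq_mul, mul_one, Finset.card_univ,
      mul_comm M] at hdeg
    omega
  · intro h
    rw [h, mul_zero, eq_comm, mul_eq_zero] at hG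
    exact hG.elim hmonic_pow.ne_zero hG0

theorem X_sub_C_pow_dvd_iff_hasseDeriv {P : R[X]} {x : R} {M : ℕ} :
    (X - C x) ^ M ∣ P ↔ ∀ l < M, (hasseDeriv l P).eval x = 0 := by
  rw [X_sub_C_pow_dvd_iff, X_pow_dvd_iff]
  simp only [← taylor_coeff, taylor_apply]

theorem coeff_mul_X_pow_add_C_pow (A : R[X]) (a : R) {Q j l : ℕ} (hl : l < Q) :
    (A * (X ^ Q + C a) ^ j).coeff l = a ^ j * A.coeff l := by
  obtain ⟨B, hB⟩ : X ^ Q ∣ (X ^ Q + C a) ^ j - C a ^ j := by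
    have h := sub_dvd_pow_sub_pow (X ^ Q + C a) (C a) j
    rwa [add_sub_cancel_right] at h
  rw [sub_eq_iff_eq_add.1 hB, mul_add, coeff_add, ← C_pow, coeff_mul_C, mul_comm (X ^ Q) B,
    ← mul_assoc, coeff_mul_X_pow', if_neg (not_le.2 hl), zero_add, mul_comm]

/-- In characteristic `p`, `(X - γ) ^ p ^ s` behaves like a constant under Hasse derivatives of
order less than `p ^ s`. -/
theorem eval_hasseDeriv_mul_X_sub_C_pow (p : ℕ) [Fact p.Prime] [CharP R p] {s : ℕ} (A : R[X])
    (γ : R) {x : R} (hx : x ^ p ^ s = x) (j : ℕ) {l : ℕ} (hl : l < p ^ s) :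
    (hasseDeriv l (A * (X - C γ) ^ (p ^ s * j))).eval x =
      (x - γ ^ p ^ s) ^ j * (hasseDeriv l A).eval x := by
  have htaylor : taylor x ((X - C γ) ^ (p ^ s * j)) = (X ^ p ^ s + C (x - γ ^ p ^ s)) ^ j := by
    rw [taylor_pow, map_sub, taylor_X, taylor_C, add_sub_assoc, ← C_sub, pow_mul,
      add_pow_char_pow, ← C_pow, sub_pow_char_pow, hx]
  rw [← taylor_coeff, taylor_mul, htaylor, coeff_mul_X_pow_add_C_pow _ _ hl, taylor_coeff]

end HasseDeriv

section AuxiliaryPolynomial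

theorem exists_natDegree_lt_and_forall_eq_zero {E σ : Type*} [Field E] [Fintype σ] {K M W : ℕ}
    (Λ : Fin M → (σ → E[X]) →ₗ[E] E[X])
    (hΛ : ∀ l k, (∀ s, (k s).natDegree < K) → (Λ l k).natDegree < W)
    (hcard : M * W < Fintype.card σ * K) :
    ∃ k : σ → E[X], k ≠ 0 ∧ (∀ s, (k s).natDegree < K) ∧ ∀ l, Λ l k = 0 := by
  let inc : (σ → degreeLT E K) →ₗ[E] (σ → E[X]) :=
    LinearMap.pi fun s => (degreeLT E K).subtype ∘ₗ LinearMap.proj s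
  let f : (σ → degreeLT E K) →ₗ[E] (Fin M → Fin W → E) :=
    LinearMap.pi fun l => LinearMap.pi fun t => lcoeff E t ∘ₗ Λ l ∘ₗ inc
  have : Module.Finite E (degreeLT E K) := Module.Finite.equiv (degreeLTEquiv E K).symm
  have hfin : Module.finrank E (Fin M → Fin W → E) < Module.finrank E (σ → degreeLT E K) := by
    have hK : Module.finrank E (degreeLT E K) = K := by
      rw [(degreeLTEquiv E K).finrank_eq, Module.finrank_fin_fun]
    have hdim : Module.finrank E (σ → degreeLT E K) = Fintype.card σ * K := by
      refine (Module.finrank_pi_fintype E (M := fun _ : σ => degreeLT E K)).trans ?_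
      rw [Finset.sum_const, Finset.card_univ, hK, smul_eq_mul]
    rw [hdim, Module.finrank_pi_fintype]
    simpa only [Module.finrank_fin_fun, Finset.sum_const, Finset.card_univ, Fintype.card_fin,
      smul_eq_mul, Module.finrank_self, mul_one] using hcard
  obtain ⟨k, hk, hk0⟩ :=
    (Submodule.ne_bot_iff _).1 (LinearMap.ker_ne_bot_of_finrank_lt hfin (f := f))
  have hK0 : K ≠ 0 := by
    rintro rfl
    simp at hcard
  have hdeg (s : σ) : (inc k s).natDegree < K := by
    rcases eq_or_ne (inc k s) 0 with h | h
    · simpa [h] using hK0.bot_lt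
    · exact (natDegree_lt_iff_degree_lt h).2 (mem_degreeLT.1 (k s).2)
  refine ⟨inc k, fun h => hk0 (funext fun s => Subtype.ext (congrFun h s)), hdeg, fun l => ?_⟩
  ext t
  rw [coeff_zero]
  by_cases ht : t < W
  · exact congrFun (congrFun (LinearMap.mem_ker.1 hk) l) ⟨t, ht⟩
  · exact coeff_eq_zero_of_natDegree_lt ((hΛ l _ hdeg).trans_le (not_lt.1 ht))

theorem eq_zero_of_sum_mul_pow_eq_zero {R : Type*} [CommRing R] [IsDomain R] {g : R} (hg : g ≠ 0)
    {J : ℕ} {A : Fin J → R} (hA : ∀ j, g ∣ A j → A j = 0) (h : ∑ j, A j * g ^ (j : ℕ) = 0)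
    (j : Fin J) : A j = 0 := by
  induction J with
  | zero => exact j.elim0
  | succ J ih =>
    have hsucc : ∑ j : Fin J, A j.succ * g ^ (j.succ : ℕ) =
        g * ∑ j : Fin J, A j.succ * g ^ (j : ℕ) := by
      rw [Finset.mul_sum]
      exact Finset.sum_congr rfl fun j _ => by rw [Fin.val_succ]; ring
    rw [Fin.sum_univ_succ, hsucc, Fin.val_zero, pow_zero, mul_one] at h
    have h0 : A 0 = 0 := hA 0 ((dvd_add_left (dvd_mul_right _ _)).1 (h ▸ dvd_zero g))
    rw [h0, zero_add, mul_eq_zero, or_iff_right hg] at h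
    exact Fin.cases h0 (ih (fun j => hA j.succ) h) j

variable {E ι : Type*} [Field E] [Fintype ι] {m J : ℕ}

/-- The auxiliary polynomial of Stepanov's method. In the application `Q` is the size of a finite
field, `D = (Q - 1) / m`, and `∏ i, (X - b i) ^ (D * e i)` is constant on the points to be
counted. -/
noncomputable def stepanovPoly (b : ι → E) (γ : E) (D Q : ℕ)
    (k : (ι → Fin m) × Fin J → E[X]) : E[X] :=
  ∑ e, k e * (∏ i, (X - C (b i)) ^ (D * e.1 i)) * (X - C γ) ^ (Q * e.2)

theorem natDegree_stepanovPoly_le (b : ι → E) (γ : E) {D Q : ℕ} (hD : D * m ≤ Q)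
    {k : (ι → Fin m) × Fin J → E[X]} (hk : ∀ e, (k e).natDegree ≤ Q) :
    (stepanovPoly b γ D Q k).natDegree ≤ Q * (J + Fintype.card ι) := by
  refine natDegree_sum_le_of_forall_le _ _ fun e _ => ?_
  have hU : (∏ i, (X - C (b i)) ^ (D * e.1 i)).natDegree ≤ Fintype.card ι * Q := by
    refine (natDegree_prod_le _ _).trans ((Finset.sum_le_card_nsmul _ _ Q fun i _ => ?_).trans
      (by simp))
    rw [natDegree_pow, natDegree_X_sub_C, mul_one]
    exact (Nat.mul_le_mul_left _ (e.1 i).2.le).trans hD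
  have hγ : ((X - C γ) ^ (Q * e.2)).natDegree = Q * e.2 := by
    rw [natDegree_pow, natDegree_X_sub_C, mul_one]
  calc _ ≤ Q + Fintype.card ι * Q + Q * e.2 :=
        natDegree_mul_le.trans
          (add_le_add (natDegree_mul_le.trans (add_le_add (hk e) hU)) hγ.le)
    _ = Q * ((e.2 + 1) + Fintype.card ι) := by ring
    _ ≤ Q * (J + Fintype.card ι) := by gcongr; exact e.2.2

variable [IsAlgClosed E] [NeZero m] (p : ℕ) [Fact p.Prime] [CharP E p]

/-- Modulo `(X - γ) ^ p ^ s` the polynomial `(X - b i) ^ D` is a radical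
`((γ - b i) ^ p ^ s / (X - b i)) ^ (1 / m)`, so the zero estimate applies to each coefficient of
the expansion in powers of `(X - γ) ^ p ^ s`. -/
theorem eq_zero_of_stepanovPoly_eq_zero {b : ι → E} (hb : Function.Injective b)
    (hm : (m : E) ≠ 0) {s D : ℕ} (hD : D * m + 1 = p ^ s) {γ : E} (hγ : ∀ i, γ ≠ b i) {K : ℕ}
    (hK : m ^ Fintype.card ι * (K + Fintype.card ι) < p ^ s)
    {k : (ι → Fin m) × Fin J → E[X]} (hk : ∀ e, (k e).natDegree ≤ K)
    (h : stepanovPoly b γ D (p ^ s) k = 0) : k = 0 := by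
  set w : ι → E[X] := fun i => (X - C (b i)) ^ D with hw
  set A : Fin J → E[X] := fun j => ∑ e, k (e, j) * ∏ i, w i ^ (e i : ℕ) with hA
  have radical (i : ι) : (X - C γ) ^ p ^ s ∣
      w i ^ m * (X - C (b i)) - C ((γ - b i) ^ p ^ s) := by
    rw [← pow_mul, ← pow_succ, hD, C_pow, ← sub_pow_char_pow, C_sub, sub_sub_sub_cancel_right]
  have hk_zero (j : Fin J) (hj : (X - C γ) ^ p ^ s ∣ A j) : (fun e => k (e, j)) = 0 :=
    eq_zero_of_dvd_sum_monomials hb (fun i => pow_ne_zero _ (sub_ne_zero.2 (hγ i))) hm radical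
      (fun e => hk (e, j)) (by rwa [natDegree_pow, natDegree_X_sub_C, mul_one]) hj
  have hA_zero : ∀ j, A j = 0 := by
    refine eq_zero_of_sum_mul_pow_eq_zero (pow_ne_zero (p ^ s) (X_sub_C_ne_zero γ))
      (fun j hj => ?_) ?_
    · have := congrFun (hk_zero j hj)
      simp only [Pi.zero_apply] at this
      simp [hA, this]
    · rw [← h, stepanovPoly, Fintype.sum_prod_type_right]
      simp only [hA, hw, Finset.sum_mul, ← pow_mul]
  exact funext fun e => congrFun (hk_zero e.2 ((hA_zero e.2).symm ▸ dvd_zero _)) e.1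

end AuxiliaryPolynomial

section PointCount

variable {E ι : Type*} [Field E] [Fintype ι] {m J : ℕ} (p : ℕ) [Fact p.Prime] [CharP E p]

theorem exists_linearMap_eval_hasseDeriv_stepanovPoly (b ζ : ι → E) (γ : E) {s M l : ℕ} (D : ℕ)
    (hl : l < M) (hM : M ≤ p ^ s) :
    ∃ Λ : ((ι → Fin m) × Fin J → E[X]) →ₗ[E] E[X],
      (∀ k K, (∀ e, (k e).natDegree ≤ K) → (Λ k).natDegree ≤ J + Fintype.card ι * M + K) ∧
      ∀ k x, x ^ p ^ s = x → (∀ i, (x - b i) ^ D = ζ i) →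
        (∏ i, (x - b i)) ^ M * (hasseDeriv l (stepanovPoly b γ D (p ^ s) k)).eval x =
          (Λ k).eval x := by
  choose! G hGdeg hG using fun (e : ι → Fin m) c (hc : c ≤ M) =>
    exists_pow_mul_hasseDeriv_prod_eq b (fun i => D * e i) hc
  have snd_le {ac : ℕ × ℕ} (hac : ac ∈ Finset.HasAntidiagonal.antidiagonal l) : ac.2 ≤ M := by
    have := Finset.HasAntidiagonal.mem_antidiagonal.1 hac
    omega
  let Λ : ((ι → Fin m) × Fin J → E[X]) →ₗ[E] E[X] :=
    ∑ e, ∑ ac ∈ Finset.HasAntidiagonal.antidiagonal l, LinearMap.mulLeft E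
      (C (∏ i, ζ i ^ (e.1 i : ℕ)) * (X - C (γ ^ p ^ s)) ^ (e.2 : ℕ) * G e.1 ac.2) ∘ₗ
        hasseDeriv ac.1 ∘ₗ LinearMap.proj e
  have hΛ (k) : Λ k = ∑ e, ∑ ac ∈ Finset.HasAntidiagonal.antidiagonal l,
      (C (∏ i, ζ i ^ (e.1 i : ℕ)) * (X - C (γ ^ p ^ s)) ^ (e.2 : ℕ) * G e.1 ac.2) *
        hasseDeriv ac.1 (k e) := by
    simp only [Λ, LinearMap.sum_apply, LinearMap.comp_apply, LinearMap.mulLeft_apply,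
      LinearMap.proj_apply]
  refine ⟨Λ, fun k K hk => ?_, fun k x hx hζ => ?_⟩
  · rw [hΛ]
    refine natDegree_sum_le_of_forall_le _ _ fun e _ =>
      natDegree_sum_le_of_forall_le _ _ fun ac hac => ?_
    refine natDegree_mul_le.trans (add_le_add (natDegree_mul_le.trans (add_le_add ?_
      (hGdeg _ _ (snd_le hac)))) ?_)
    · refine (natDegree_C_mul_le _ _).trans (natDegree_pow_le.trans ?_)
      rw [natDegree_X_sub_C, mul_one]
      exact e.2.2.le
    · exact (natDegree_hasseDeriv_le _ _).trans ((Nat.sub_le _ _).trans (hk e))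
  · have hGx (e : ι → Fin m) (c : ℕ) (hc : c ≤ M) : (∏ i, (x - b i)) ^ M *
        (hasseDeriv c (∏ i, (X - C (b i)) ^ (D * (e i : ℕ)))).eval x =
          (∏ i, ζ i ^ (e i : ℕ)) * (G e c).eval x := by
      simpa only [eval_mul, eval_pow, eval_prod, eval_sub, eval_X, eval_C, pow_mul, hζ] using
        congrArg (eval x) (hG e c hc)
    rw [hΛ, stepanovPoly, map_sum, eval_finsetSum, eval_finsetSum, Finset.mul_sum]
    refine Finset.sum_congr rfl fun e _ => ?_
    rw [eval_hasseDeriv_mul_X_sub_C_pow p _ _ hx _ (hl.trans_le hM), hasseDeriv_mul,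
      eval_finsetSum, eval_finsetSum, Finset.mul_sum, Finset.mul_sum]
    refine Finset.sum_congr rfl fun ac hac => ?_
    simp only [eval_mul, eval_pow, eval_sub, eval_X, eval_C]
    linear_combination
      ((x - γ ^ p ^ s) ^ (e.2 : ℕ) * eval x (hasseDeriv ac.1 (k e))) * hGx e.1 ac.2 (snd_le hac)

theorem card_mul_le_natDegree {E : Type*} [Field E] {P : E[X]} (hP : P ≠ 0) {T : Finset E} {M : ℕ}
    (hT : ∀ x ∈ T, (X - C x) ^ M ∣ P) : T.card * M ≤ P.natDegree := by
  have hdvd : ∏ x ∈ T, (X - C x) ^ M ∣ P :=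
    Finset.prod_dvd_of_coprime (fun x _ y _ hxy =>
      (isCoprime_X_sub_C_of_isUnit_sub (sub_ne_zero.2 hxy).isUnit).pow) hT
  have hdeg := natDegree_le_of_dvd hdvd hP
  rw [natDegree_prod_of_monic _ _ fun x _ => (monic_X_sub_C x).pow M] at hdeg
  simpa only [natDegree_pow, natDegree_X_sub_C, mul_one, Finset.sum_const, smul_eq_mul] using hdeg

variable [IsAlgClosed E] [NeZero m]

theorem card_mul_le_of_pow_eq {b : ι → E} (hb : Function.Injective b) (hm : (m : E) ≠ 0)
    {s D : ℕ} (hD : D * m + 1 = p ^ s) {J K M : ℕ} (hM : M ≤ p ^ s)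
    (hK : m ^ Fintype.card ι * (K + Fintype.card ι) < p ^ s)
    (hcount : M * (K + J + Fintype.card ι * M) < m ^ Fintype.card ι * J * K) {ζ : ι → E}
    {T : Finset E} (hT : ∀ x ∈ T, x ^ p ^ s = x ∧ ∀ i, x ≠ b i ∧ (x - b i) ^ D = ζ i) :
    T.card * M ≤ p ^ s * (J + Fintype.card ι) := by
  obtain ⟨γ, hγ⟩ := Infinite.exists_notMem_finset (Finset.univ.image b)
  have hγ (i : ι) : γ ≠ b i := fun h => hγ (h ▸ Finset.mem_image_of_mem b (Finset.mem_univ i))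
  have hK0 : 0 < K := by
    rcases K.eq_zero_or_pos with rfl | h
    · simp at hcount
    · exact h
  choose Λ hΛdeg hΛ using fun l : Fin M =>
    exists_linearMap_eval_hasseDeriv_stepanovPoly (m := m) (J := J) p b ζ γ D l.2 hM
  obtain ⟨k, hk0, hk, hker⟩ := exists_natDegree_lt_and_forall_eq_zero (K := K)
    (W := K + J + Fintype.card ι * M) Λ
    (fun l k hk => by
      have := hΛdeg l k (K - 1) fun e => Nat.le_pred_of_lt (hk e)
      omega)
    (by simpa only [Fintype.card_prod, Fintype.card_fun, Fintype.card_fin] using hcount)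
  have hP : stepanovPoly b γ D (p ^ s) k ≠ 0 := fun h =>
    hk0 (eq_zero_of_stepanovPoly_eq_zero p hb hm hD hγ hK (fun e => (hk e).le) h)
  have hvanish (x : E) (hx : x ∈ T) : (X - C x) ^ M ∣ stepanovPoly b γ D (p ^ s) k := by
    obtain ⟨hxs, hxb⟩ := hT x hx
    have hne : (∏ i, (x - b i)) ^ M ≠ 0 :=
      pow_ne_zero _ (Finset.prod_ne_zero_iff.2 fun i _ => sub_ne_zero.2 (hxb i).1)
    refine X_sub_C_pow_dvd_iff_hasseDeriv.2 fun l hl => ?_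
    have h := hΛ ⟨l, hl⟩ k x hxs fun i => (hxb i).2
    rw [hker, eval_zero] at h
    exact (mul_eq_zero.1 h).resolve_left hne
  have hKQ : K ≤ p ^ s := by
    have := Nat.le_mul_of_pos_left (K + Fintype.card ι) (pow_pos (NeZero.pos m) (Fintype.card ι))
    omega
  exact (card_mul_le_natDegree hP hvanish).trans
    (natDegree_stepanovPoly_le b γ (by omega) fun e => (hk e).le.trans hKQ)

/-- The multiplicity is `M = R * N` and the number of blocks `J = N + 8 * R * (1 + r * R)`. -/
theorem exists_stepanov_parameter {R r N : ℕ} (hR : 0 < R) (hN : 8 * R + 4 * r + 8 ≤ N) :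
    ∃ K, R * (K + r) < N * N ∧
      R * N * (K + (N + 8 * R * (1 + r * R)) + r * (R * N)) <
        R * (N + 8 * R * (1 + r * R)) * K := by
  set C := 8 * R * (1 + r * R) with hC
  set K := N * N / (2 * R)
  have hN0 : 0 < N := by omega
  have hK_le : 2 * R * K ≤ N * N := Nat.mul_div_le _ _
  have hK_gt : N * N < 2 * R * K + 2 * R := Nat.lt_mul_div_succ _ (by omega)
  have hRr : 8 * R * r ≤ N * N := Nat.mul_le_mul (by omega) (by omega)
  have hNN : 0 < N * N := Nat.mul_pos hN0 hN0
  refine ⟨K, by nlinarith, ?_⟩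
  have hK_ge : N * N ≤ 4 * R * K := by
    have : 8 * R ≤ N * N := le_trans (by omega) (Nat.le_mul_of_pos_left N hN0)
    linarith
  have hCK : N * N * 2 * (1 + r * R) ≤ C * K := by
    rw [hC]
    nlinarith [Nat.mul_le_mul_right (2 * (1 + r * R)) hK_ge]
  have hNC : N * C + N ≤ N * N * (1 + r * R) :=
    calc N * C + N = N * (8 * R * (1 + r * R) + 1) := by rw [hC]; ring
      _ ≤ N * ((8 * R + 1) * (1 + r * R)) := Nat.mul_le_mul_left _ (by nlinarith)
      _ ≤ N * (N * (1 + r * R)) := Nat.mul_le_mul_left _ (Nat.mul_le_mul_right _ (by omega))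
      _ = N * N * (1 + r * R) := by ring
  calc R * N * (K + (N + C) + r * (R * N)) = R * (N * (K + (N + C) + r * (R * N))) := by ring
    _ < R * ((N + C) * K) := Nat.mul_lt_mul_of_pos_left (by nlinarith) hR
    _ = R * (N + C) * K := by ring

theorem exists_card_mul_le_of_pow_eq {b : ι → E} (hb : Function.Injective b)
    (hm : (m : E) ≠ 0) : ∃ C₀ N₀ : ℕ, ∀ t D : ℕ, N₀ ≤ p ^ t → D * m + 1 = p ^ (2 * t) →
      ∀ (ζ : ι → E) (T : Finset E),
        (∀ x ∈ T, x ^ p ^ (2 * t) = x ∧ ∀ i, x ≠ b i ∧ (x - b i) ^ D = ζ i) →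
        T.card * m ^ Fintype.card ι ≤ p ^ (2 * t) + C₀ * p ^ t := by
  set r := Fintype.card ι
  set R := m ^ r
  set C₁ := 8 * R * (1 + r * R)
  refine ⟨C₁ + r, 8 * R + 4 * r + 8, fun t D hN hD ζ T hT => ?_⟩
  obtain ⟨K, hK, hcount⟩ := exists_stepanov_parameter (pow_pos (NeZero.pos m) r) hN
  have hQ : p ^ (2 * t) = p ^ t * p ^ t := by rw [two_mul, pow_add]
  have hRN : R * p ^ t ≤ p ^ (2 * t) := hQ ▸ Nat.mul_le_mul_right _ (by omega)
  have hcard := card_mul_le_of_pow_eq p hb hm hD hRN (hQ ▸ hK) hcount hT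
  refine Nat.le_of_mul_le_mul_left ?_ (show 0 < p ^ t by omega)
  calc p ^ t * (T.card * R) = T.card * (R * p ^ t) := by ring
    _ ≤ p ^ (2 * t) * (p ^ t + C₁ + r) := hcard
    _ = p ^ t * (p ^ (2 * t) + (C₁ + r) * p ^ t) := by rw [hQ]; ring

end PointCount

end Stepanov

section PowerSums

open Polynomial

theorem natCast_mul_neg_one_pow_mul_esymm {R : Type*} [CommRing R] (ω : Multiset R) (n : ℕ) :
    (n : R) * ((-1) ^ n * ω.esymm n) =
      ∑ i ∈ Finset.Icc 1 n, -(ω.map (· ^ i)).sum * ((-1) ^ (n - i) * ω.esymm (n - i)) := by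
  have hω : (Finset.univ.val.map fun x : ω => (x : R)) = ω := ω.map_univ_coe
  have hesymm (k : ℕ) : MvPolynomial.aeval (fun x : ω => (x : R)) (MvPolynomial.esymm ω R k) =
      ω.esymm k := by
    rw [MvPolynomial.aeval_esymm_eq_multiset_esymm, hω]
  have hpsum (k : ℕ) : MvPolynomial.aeval (fun x : ω => (x : R)) (MvPolynomial.psum ω R k) =
      (ω.map (· ^ k)).sum := by
    conv_rhs => rw [← hω, Multiset.map_map]
    rw [MvPolynomial.psum, map_sum]
    simp only [map_pow, MvPolynomial.aeval_X]
    rfl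
  have newton := congrArg (MvPolynomial.aeval fun x : ω => (x : R))
    (MvPolynomial.mul_esymm_eq_sum ω R n)
  simp only [map_mul, map_natCast, map_pow, map_neg, map_one, map_sum, hesymm, hpsum] at newton
  rw [mul_left_comm, newton, ← mul_assoc, ← pow_add, Odd.neg_one_pow ⟨n, by ring⟩, neg_one_mul,
    ← Finset.sum_neg_distrib]
  refine Finset.sum_nbij' Prod.snd (fun i => (n - i, i)) ?_ ?_ ?_ ?_ ?_ <;>
    simp only [Finset.mem_filter, Finset.HasAntidiagonal.mem_antidiagonal, Finset.mem_Icc,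
      Prod.forall, Prod.mk.injEq, and_true]
  · omega
  · omega
  · omega
  · simp
  · rintro a b ⟨rfl, -⟩
    rw [Nat.add_sub_cancel]
    ring

theorem exists_multiset_esymm_eq {K : Type*} [Field K] [IsAlgClosed K] {A : ℕ → K} {N : ℕ}
    (hA0 : A 0 = 1) (hA : ∀ n, N < n → A n = 0) :
    ∃ ω : Multiset K, ω.card = N ∧ ∀ n, (-1) ^ n * ω.esymm n = A n := by
  set P : K[X] := ∑ i ∈ Finset.range (N + 1), C (A (N - i)) * X ^ i with hP
  have hcoeff {i : ℕ} (hi : i ≤ N) : P.coeff i = A (N - i) := by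
    simp [hP, finsetSum_coeff, coeff_C_mul, coeff_X_pow, Nat.lt_succ_of_le hi]
  have hN : P.coeff N = 1 := by rw [hcoeff le_rfl, Nat.sub_self, hA0]
  have hdeg : P.natDegree ≤ N := natDegree_sum_le_of_forall_le _ _ fun i hi =>
    (natDegree_C_mul_X_pow_le _ _).trans (Nat.lt_succ_iff.1 (Finset.mem_range.1 hi))
  have hmonic : P.Monic := monic_of_natDegree_le_of_coeff_eq_one N hdeg hN
  have hdegN : P.natDegree = N :=
    natDegree_eq_of_le_of_coeff_ne_zero hdeg (hN ▸ one_ne_zero)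
  have hroots : P.roots.card = N := (splits_iff_card_roots.1 (IsAlgClosed.splits P)).trans hdegN
  refine ⟨P.roots, hroots, fun n => ?_⟩
  rcases lt_or_ge N n with h | h
  · rw [hA n h, Multiset.esymm, Multiset.powersetCard_eq_empty _ (hroots.trans_lt h)]
    simp
  · have := coeff_eq_esymm_roots_of_card (hroots.trans hdegN.symm)
      (show N - n ≤ P.natDegree by omega)
    rwa [hcoeff (Nat.sub_le _ _), hmonic.leadingCoeff, one_mul, hdegN, Nat.sub_sub_self h,
      eq_comm] at this

/-- Newton's recursion says that `∑ A n * T ^ n` is the polynomial `∏ (1 - a * T)`, `a ∈ ω`, whose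
logarithmic derivative is `∑ S n * T ^ n / T`. -/
theorem exists_multiset_eq_neg_sum_pow {K : Type*} [Field K] [IsAlgClosed K] {A S : ℕ → K} {N : ℕ}
    (hA0 : A 0 = 1) (hA : ∀ n, N < n → A n = 0)
    (hrec : ∀ n : ℕ, (n : K) * A n = ∑ i ∈ Finset.Icc 1 n, S i * A (n - i)) :
    ∃ ω : Multiset K, ω.card = N ∧ ∀ n, 1 ≤ n → S n = -(ω.map (· ^ n)).sum := by
  obtain ⟨ω, hcard, hω⟩ := exists_multiset_esymm_eq hA0 hA
  refine ⟨ω, hcard, fun n => ?_⟩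
  induction n using Nat.strong_induction_on with
  | _ n ih =>
    intro hn
    have newton := natCast_mul_neg_one_pow_mul_esymm ω n
    simp only [hω] at newton
    have hlower : ∑ i ∈ Finset.Ico 1 n, S i * A (n - i) =
        ∑ i ∈ Finset.Ico 1 n, -(ω.map (· ^ i)).sum * A (n - i) :=
      Finset.sum_congr rfl fun i hi => by
        rw [ih i (Finset.mem_Ico.1 hi).2 (Finset.mem_Ico.1 hi).1]
    rw [hrec, ← Finset.Ico_insert_right hn, Finset.sum_insert (by simp),
      Finset.sum_insert (by simp), hlower, Nat.sub_self, hA0, mul_one, mul_one] at newton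
    exact add_right_cancel newton

/-- Lagrange interpolation at the elements of `ω` isolates the powers of a single one. -/
theorem exists_sum_mul_sum_pow_eq_pow {K : Type*} [Field K] [CharZero K] {ω : Multiset K} {a : K}
    (ha : a ∈ ω) : ∃ (d : ℕ) (c : ℕ → K), ∀ s,
      ∑ j ∈ Finset.range d, c j * (ω.map (· ^ (s + j))).sum = a ^ s := by
  set ℓ : K[X] := Lagrange.basis ω.toFinset id a
  have hcount : (ω.count a : K) ≠ 0 := Nat.cast_ne_zero.2 (Multiset.count_ne_zero.2 ha)
  refine ⟨ℓ.natDegree + 1, fun j => (ω.count a : K)⁻¹ * ℓ.coeff j, fun s => ?_⟩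
  have eval_basis (b : K) (hb : b ∈ ω.toFinset) : ℓ.eval b = if b = a then 1 else 0 := by
    split_ifs with h
    · rw [h]
      exact Lagrange.eval_basis_self (v := id) (Set.injOn_id _) (Multiset.mem_toFinset.2 ha)
    · exact Lagrange.eval_basis_of_ne (v := id) (Ne.symm h) hb
  have hsum : ∑ j ∈ Finset.range (ℓ.natDegree + 1), ℓ.coeff j * (ω.map (· ^ (s + j))).sum =
      (ω.count a : K) * a ^ s := by
    calc _ = ∑ b ∈ ω.toFinset, (ω.count b : K) * b ^ s * ℓ.eval b := by
          simp only [Finset.sum_multiset_map_count, Finset.mul_sum, eval_eq_sum_range]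
          rw [Finset.sum_comm]
          refine Finset.sum_congr rfl fun b _ => Finset.sum_congr rfl fun j _ => ?_
          rw [nsmul_eq_mul]
          ring
      _ = ∑ b ∈ ω.toFinset, if b = a then (ω.count b : K) * b ^ s else 0 :=
          Finset.sum_congr rfl fun b hb => by rw [eval_basis b hb, mul_ite, mul_one, mul_zero]
      _ = (ω.count a : K) * a ^ s := by
          rw [Finset.sum_ite_eq', if_pos (Multiset.mem_toFinset.2 ha)]
  simp only [mul_assoc, ← Finset.mul_sum]
  rw [hsum, inv_mul_cancel_left₀ hcount]

theorem norm_le_of_norm_sum_pow_le {K : Type*} [NormedField K] [CharZero K] {ω : Multiset K}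
    {C R : ℝ} (hR : 0 < R) {N : ℕ} (h : ∀ s, N ≤ s → ‖(ω.map (· ^ s)).sum‖ ≤ C * R ^ s) {a : K}
    (ha : a ∈ ω) : ‖a‖ ≤ R := by
  obtain ⟨d, c, hc⟩ := exists_sum_mul_sum_pow_eq_pow ha
  set B : ℝ := ∑ j ∈ Finset.range d, ‖c j‖ * (C * R ^ j) with hB
  have hgrowth (s : ℕ) (hs : N ≤ s) : ‖a‖ ^ s ≤ B * R ^ s := by
    rw [← norm_pow, ← hc s, hB, Finset.sum_mul]
    refine norm_sum_le_of_le _ fun j _ => ?_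
    rw [norm_mul, mul_assoc, mul_assoc, ← pow_add, add_comm j]
    exact mul_le_mul_of_nonneg_left (h _ (by omega)) (norm_nonneg _)
  by_contra! hlt
  have hratio : 1 < ‖a‖ / R := (one_lt_div hR).2 hlt
  obtain ⟨s, hs⟩ := pow_unbounded_of_one_lt B hratio
  have hbounded := hgrowth (max s N) (le_max_right _ _)
  rw [← div_le_iff₀ (by positivity), ← div_pow] at hbounded
  exact (hs.trans_le (pow_le_pow_right₀ hratio.le (le_max_left s N))).not_ge hbounded

theorem norm_le_of_norm_sum_pow_mul_le {K : Type*} [NormedField K] [CharZero K] {ω : Multiset K}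
    {C R : ℝ} (hR : 0 < R) {e N : ℕ} (he : e ≠ 0)
    (h : ∀ s, N ≤ s → ‖(ω.map (· ^ (e * s))).sum‖ ≤ C * R ^ (e * s)) {a : K} (ha : a ∈ ω) :
    ‖a‖ ≤ R := by
  have hpow : ‖a ^ e‖ ≤ R ^ e :=
    norm_le_of_norm_sum_pow_le (ω := ω.map (· ^ e)) (C := C) (N := N) (pow_pos hR e)
      (fun s hs => by simpa only [Multiset.map_map, Function.comp_def, ← pow_mul] using h s hs)
      (Multiset.mem_map_of_mem (· ^ e) ha)
  rw [norm_pow] at hpow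
  exact le_of_pow_le_pow_left₀ he hR.le hpow

end PowerSums

section FrobeniusNorm

open Polynomial

theorem minpoly_pow_dvd_iff {K E : Type*} [Field K] [Field E] [Algebra K E] {x : E}
    (hx : IsSeparable K x) {g : K[X]} (hg : g ≠ 0) (j : ℕ) :
    minpoly K x ^ j ∣ g ↔ j ≤ (g.map (algebraMap K E)).rootMultiplicity x := by
  have hroot : ((minpoly K x).map (algebraMap K E)).IsRoot x := by
    rw [IsRoot.def, eval_map_algebraMap, minpoly.aeval]
  have hmult : ((minpoly K x).map (algebraMap K E)).rootMultiplicity x = 1 :=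
    le_antisymm (rootMultiplicity_le_one_of_separable (Separable.map hx) x)
      ((rootMultiplicity_pos ((Polynomial.map_ne_zero_iff (algebraMap K E).injective).2
        (minpoly.ne_zero hx.isIntegral))).2 hroot)
  induction j generalizing g with
  | zero => simp
  | succ j ih =>
    have hg' : g.map (algebraMap K E) ≠ 0 :=
      (Polynomial.map_ne_zero_iff (algebraMap K E).injective).2 hg
    suffices minpoly K x ∣ g → (minpoly K x ^ (j + 1) ∣ g ↔
        j + 1 ≤ (g.map (algebraMap K E)).rootMultiplicity x) by
      refine ⟨fun h => (this ((dvd_pow_self _ j.succ_ne_zero).trans h)).1 h, fun h => ?_⟩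
      refine (this (minpoly.dvd K x ?_)).2 h
      rw [← eval_map_algebraMap]
      exact (rootMultiplicity_pos hg').1 (Nat.succ_pos j |>.trans_le h)
    rintro ⟨r, rfl⟩
    have hr : r ≠ 0 := right_ne_zero_of_mul hg
    rw [Polynomial.map_mul] at hg' ⊢
    rw [pow_succ', mul_dvd_mul_iff_left (left_ne_zero_of_mul hg), rootMultiplicity_mul hg', hmult,
      add_comm, Nat.add_le_add_iff_left]
    exact ih hr

variable {F E : Type*} [Field F] [Field E] [Algebra F E]

theorem isSeparable_of_isIntegral [PerfectField F] {x : E} (hx : IsIntegral F x) :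
    IsSeparable F x :=
  PerfectField.separable_of_irreducible (minpoly.irreducible hx)

variable [Fintype F]

theorem isIntegral_of_pow_card_pow_eq {n : ℕ} (hn : n ≠ 0) {x : E}
    (hx : x ^ Fintype.card F ^ n = x) : IsIntegral F x := by
  refine ⟨X ^ Fintype.card F ^ n - X, monic_X_pow_sub ?_, by simp [hx]⟩
  rw [degree_X]
  exact_mod_cast Nat.one_lt_pow hn Fintype.one_lt_card

theorem frobeniusAlgHom_pow_apply {R : Type*} [CommRing R] [Algebra F R] (n : ℕ) (x : R) :
    (FiniteField.frobeniusAlgHom F R ^ n) x = x ^ Fintype.card F ^ n := by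
  rw [AlgHom.coe_pow, FiniteField.coe_frobeniusAlgHom, pow_iterate]

theorem pow_card_pow_eq_iff_natDegree_minpoly_dvd {x : E} (hx : IsIntegral F x) (n : ℕ) :
    x ^ Fintype.card F ^ n = x ↔ (minpoly F x).natDegree ∣ n := by
  have := IntermediateField.adjoin.finiteDimensional hx
  have : Finite (IntermediateField.adjoin F {x}) := Module.finite_of_finite F
  rw [← IntermediateField.adjoin.finrank hx, ← FiniteField.orderOf_frobeniusAlgHom,
    orderOf_dvd_iff_pow_eq_one]
  constructor
  · intro h
    refine IntermediateField.adjoin_algHom_ext F fun y hy => Subtype.ext ?_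
    obtain rfl := Set.mem_singleton_iff.1 hy
    rw [frobeniusAlgHom_pow_apply]
    exact h
  · intro h
    have := frobeniusAlgHom_pow_apply (F := F) n (IntermediateField.AdjoinSimple.gen F x)
    rw [h] at this
    exact (congrArg Subtype.val this).symm

theorem aeval_pow_card_pow_eq_zero {g : F[X]} {x : E} (hx : aeval x g = 0) (l : ℕ) :
    aeval (x ^ Fintype.card F ^ l) g = 0 := by
  rw [← frobeniusAlgHom_pow_apply, aeval_algHom_apply, hx, map_zero]

theorem map_minpoly_eq_prod {x : E} (hx : IsIntegral F x) :
    (minpoly F x).map (algebraMap F E) =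
      ∏ l ∈ Finset.range (minpoly F x).natDegree, (X - C (x ^ Fintype.card F ^ l)) := by
  set d := (minpoly F x).natDegree with hd
  have hinj : Set.InjOn (fun l => x ^ Fintype.card F ^ l) (Finset.range d) := by
    have hmin : Function.minimalPeriod (FiniteField.frobeniusAlgHom F E) x = d := by
      refine Nat.dvd_right_iff_eq.1 fun n => ?_
      rw [← Function.isPeriodicPt_iff_minimalPeriod_dvd, hd,
        ← pow_card_pow_eq_iff_natDegree_minpoly_dvd hx, Function.IsPeriodicPt,
        Function.IsFixedPt, FiniteField.coe_frobeniusAlgHom, pow_iterate]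
    have := Function.iterate_injOn_Iio_minimalPeriod
      (f := FiniteField.frobeniusAlgHom F E) (x := x)
    rw [hmin, FiniteField.coe_frobeniusAlgHom] at this
    simpa only [pow_iterate, Finset.coe_range] using this
  refine eq_of_monic_of_dvd_of_natDegree_le
    (monic_prod_of_monic _ _ fun _ _ => monic_X_sub_C _) ((minpoly.monic hx).map _) ?_ ?_
  · refine Finset.prod_dvd_of_coprime (fun a ha b hb hab => isCoprime_X_sub_C_of_isUnit_sub
      (sub_ne_zero.2 fun h => hab (hinj ha hb h)).isUnit) fun l _ => ?_
    rw [dvd_iff_isRoot, IsRoot.def, eval_map_algebraMap]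
    exact aeval_pow_card_pow_eq_zero (minpoly.aeval F x) l
  · rw [natDegree_map, natDegree_prod_of_monic _ _ fun _ _ => monic_X_sub_C _]
    simp only [natDegree_X_sub_C, Finset.sum_const, Finset.card_range, smul_eq_mul, mul_one, hd,
      le_refl]

variable (F) in
/-- The norm of `X - x` from `K[X]` to `F[X]`, where `K` is the extension of degree `n` of the
finite field `F` and `x ∈ K`; see `map_frobNorm` for the product formula. -/
noncomputable def frobNorm (n : ℕ) (x : E) : F[X] :=
  minpoly F x ^ (n / (minpoly F x).natDegree)

theorem frobNorm_monic {n : ℕ} {x : E} (hx : x ^ Fintype.card F ^ n = x) :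
    (frobNorm F n x).Monic := by
  rcases eq_or_ne n 0 with rfl | hn
  · rw [frobNorm, Nat.zero_div, pow_zero]
    exact monic_one
  · exact (minpoly.monic (isIntegral_of_pow_card_pow_eq hn hx)).pow _

theorem map_frobNorm {n : ℕ} {x : E} (hx : x ^ Fintype.card F ^ n = x) :
    (frobNorm F n x).map (algebraMap F E) =
      ∏ l ∈ Finset.range n, (X - C (x ^ Fintype.card F ^ l)) := by
  rcases eq_or_ne n 0 with rfl | hn
  · simp [frobNorm]
  have hint := isIntegral_of_pow_card_pow_eq hn hx
  have hper := pow_card_pow_eq_iff_natDegree_minpoly_dvd (F := F) hint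
  obtain ⟨j, rfl⟩ := (hper n).1 hx
  rw [frobNorm, Nat.mul_div_cancel_left j (minpoly.natDegree_pos hint), Polynomial.map_pow]
  clear hx hn
  induction j with
  | zero => simp
  | succ j ih =>
    rw [pow_succ, ih, map_minpoly_eq_prod hint, mul_add, mul_one, Finset.prod_range_add]
    simp only [pow_add, pow_mul x, (hper _).2 (dvd_mul_right _ j)]

theorem natDegree_frobNorm {n : ℕ} {x : E} (hx : x ^ Fintype.card F ^ n = x) :
    (frobNorm F n x).natDegree = n := by
  rw [← natDegree_map (algebraMap F E), map_frobNorm hx,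
    natDegree_prod_of_monic _ _ fun _ _ => monic_X_sub_C _]
  simp only [natDegree_X_sub_C, Finset.sum_const, Finset.card_range, smul_eq_mul, mul_one]

theorem aeval_frobNorm {n : ℕ} (hn : n ≠ 0) {x : E} (hx : x ^ Fintype.card F ^ n = x) :
    aeval x (frobNorm F n x) = 0 := by
  rw [← eval_map_algebraMap, map_frobNorm hx, eval_prod]
  exact Finset.prod_eq_zero (Finset.mem_range.2 (Nat.pos_of_ne_zero hn)) (by simp)

theorem card_filter_frobNorm_dvd {g : F[X]} (hg : g ≠ 0) {x : E} (hx : aeval x g = 0) :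
    ((Finset.Icc 1 g.natDegree).filter fun i => x ^ Fintype.card F ^ i = x ∧
      frobNorm F i x ∣ g).card = (g.map (algebraMap F E)).rootMultiplicity x := by
  have hint : IsIntegral F x := IsAlgebraic.isIntegral ⟨g, hg, hx⟩
  have hdvd := minpoly_pow_dvd_iff (isSeparable_of_isIntegral hint) hg
  have hd := minpoly.natDegree_pos hint
  have hset : ((Finset.Icc 1 g.natDegree).filter fun i => x ^ Fintype.card F ^ i = x ∧
      frobNorm F i x ∣ g) = (Finset.Icc 1 ((g.map (algebraMap F E)).rootMultiplicity x)).image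
        ((minpoly F x).natDegree * ·) := by
    ext i
    simp only [Finset.mem_filter, Finset.mem_Icc, Finset.mem_image, frobNorm,
      pow_card_pow_eq_iff_natDegree_minpoly_dvd hint, hdvd]
    constructor
    · rintro ⟨⟨hi, -⟩, ⟨j, rfl⟩, hj⟩
      rw [Nat.mul_div_cancel_left j hd] at hj
      exact ⟨j, ⟨Nat.pos_of_mul_pos_left hi, hj⟩, rfl⟩
    · rintro ⟨j, ⟨hj1, hj⟩, rfl⟩
      rw [Nat.mul_div_cancel_left j hd]
      refine ⟨⟨Nat.mul_pos hd hj1, ?_⟩, dvd_mul_right _ _, hj⟩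
      have := natDegree_le_of_dvd ((hdvd j).2 hj) hg
      rwa [natDegree_pow, mul_comm] at this
  rw [hset, Finset.card_image_of_injective _ fun a b h => Nat.eq_of_mul_eq_mul_left hd h,
    Nat.card_Icc, Nat.add_sub_cancel]

end FrobeniusNorm

section MulRemainder

open Polynomial

variable {K : Type*} [Field K]

/-- The polynomial with the same quotient by `h` as `g` and with the remainder of `a * g`. For `a`
invertible modulo `h`, this permutes the monic polynomials of a given degree `≥ deg h`, which makes
the sum over them of a character modulo `h` vanish if the character is nontrivial at `a`. -/
noncomputable def mulRemainder (h a g : K[X]) : K[X] :=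
  h * (g /ₘ h) + (a * g) %ₘ h

theorem mulRemainder_mulRemainder {h a b : K[X]} (hh : h.Monic) (hab : h ∣ b * a - 1) (g : K[X]) :
    mulRemainder h b (mulRemainder h a g) = g := by
  obtain ⟨hdiv, -⟩ := div_modByMonic_unique (f := mulRemainder h a g) (g /ₘ h) ((a * g) %ₘ h) hh
    ⟨add_comm _ _, degree_modByMonic_lt _ hh⟩
  have hmod : (b * mulRemainder h a g) %ₘ h = g %ₘ h := by
    refine modByMonic_eq_of_dvd_sub hh ?_
    obtain ⟨u, hu⟩ := hab
    have hag := modByMonic_add_div (a * g) h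
    refine ⟨b * (g /ₘ h - (a * g) /ₘ h) + u * g, ?_⟩
    rw [mulRemainder]
    linear_combination b * hag + g * hu
  rw [mulRemainder, hdiv, hmod, add_comm, modByMonic_add_div]

theorem map_mulRemainder {R : Type*} [CommSemiring R] (χ : K[X] →* R)
    {h : K[X]} (hmod : ∀ g u, χ (g + h * u) = χ g) (a g : K[X]) :
    χ (mulRemainder h a g) = χ a * χ g := by
  rw [← map_mul, ← hmod (a * g) (g /ₘ h - (a * g) /ₘ h), mulRemainder]
  congr 1
  linear_combination modByMonic_add_div (a * g) h

end MulRemainder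

section LFunction

open Polynomial

/-- The monic polynomials of degree `n` over a finite field. -/
noncomputable def monicsOfDegree (F : Type*) [Field F] [Fintype F] (n : ℕ) : Finset F[X] :=
  Finset.univ.image fun a : Fin n → F => X ^ n + ∑ i, C (a i) * X ^ (i : ℕ)

/-- The elements of `E` satisfying `x ^ q ^ n = x`, where `q` is the cardinality of `F`: for
algebraically closed `E`, the intermediate extension of degree `n` of `F`. For `n = 0` this is
empty. -/
noncomputable def frobFixed (F : Type*) (E : Type*) [Fintype F] [Field E] (n : ℕ) : Finset E :=
  (X ^ Fintype.card F ^ n - X : E[X]).roots.toFinset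

variable {F E R : Type*} [Field F] [Fintype F] [Field E] [Algebra F E]

theorem mem_monicsOfDegree {n : ℕ} {g : F[X]} :
    g ∈ monicsOfDegree F n ↔ g.Monic ∧ g.natDegree = n := by
  rw [monicsOfDegree, Finset.mem_image]
  constructor
  · rintro ⟨a, -, rfl⟩
    have h := degree_sum_fin_lt a
    refine ⟨monic_X_pow_add h, natDegree_eq_of_degree_eq_some ?_⟩
    rw [degree_add_eq_left_of_degree_lt (by rwa [degree_X_pow]), degree_X_pow]
  · rintro ⟨hg, rfl⟩
    refine ⟨fun i => g.coeff i, Finset.mem_univ _, ?_⟩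
    conv_rhs => rw [hg.as_sum]
    rw [Fin.sum_univ_eq_sum_range (fun i => C (g.coeff i) * X ^ i : ℕ → F[X])]

theorem monicsOfDegree_zero : monicsOfDegree F 0 = {1} := by
  ext g
  rw [mem_monicsOfDegree, Finset.mem_singleton]
  exact ⟨fun h => h.1.natDegree_eq_zero.1 h.2, fun h => by simp [h]⟩

theorem mem_frobFixed {F E : Type*} [Field F] [Fintype F] [Field E] {n : ℕ} (hn : n ≠ 0) {x : E} :
    x ∈ frobFixed F E n ↔ x ^ Fintype.card F ^ n = x := by
  rw [frobFixed, Multiset.mem_toFinset, mem_roots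
    (FiniteField.X_pow_card_pow_sub_X_ne_zero _ hn Fintype.one_lt_card)]
  simp [sub_eq_zero]

theorem card_frobFixed [IsAlgClosed E] {n : ℕ} (hn : n ≠ 0) :
    (frobFixed F E n).card = Fintype.card F ^ n := by
  obtain ⟨p, hp⟩ := CharP.exists F
  obtain ⟨a, _, ha⟩ := FiniteField.card F p
  have : CharP E p := charP_of_injective_algebraMap (algebraMap F E).injective p
  have hsep : (X ^ Fintype.card F ^ n - X : E[X]).Separable :=
    galois_poly_separable p _ (by rw [ha, ← pow_mul]; exact dvd_pow_self _ (by positivity))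
  rw [frobFixed, Multiset.toFinset_card_of_nodup (nodup_roots hsep),
    (splits_iff_card_roots.1 (IsAlgClosed.splits _)),
    FiniteField.X_pow_card_pow_sub_X_natDegree_eq _ hn Fintype.one_lt_card]

theorem filter_frobNorm_dvd_eq_filter_roots {g : F[X]} (hg : g ≠ 0) {i : ℕ} (hi : i ≠ 0) :
    ((frobFixed F E i).filter fun x => frobNorm F i x ∣ g) =
      (g.map (algebraMap F E)).roots.toFinset.filter fun x =>
        x ^ Fintype.card F ^ i = x ∧ frobNorm F i x ∣ g := by
  ext x
  rw [Finset.mem_filter, Finset.mem_filter, mem_frobFixed hi, Multiset.mem_toFinset,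
    mem_roots ((Polynomial.map_ne_zero_iff (algebraMap F E).injective).2 hg), IsRoot.def,
    eval_map_algebraMap]
  refine ⟨fun h => ⟨?_, h⟩, fun h => h.2⟩
  obtain ⟨u, hu⟩ := h.2
  rw [hu, map_mul, aeval_frobNorm hi h.1, zero_mul]

theorem sum_card_filter_frobNorm_dvd [IsAlgClosed E] {g : F[X]} (hg : g ≠ 0) :
    ∑ i ∈ Finset.Icc 1 g.natDegree, ((frobFixed F E i).filter fun x => frobNorm F i x ∣ g).card =
      g.natDegree := by
  have hg' : g.map (algebraMap F E) ≠ 0 :=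
    (Polynomial.map_ne_zero_iff (algebraMap F E).injective).2 hg
  calc ∑ i ∈ Finset.Icc 1 g.natDegree,
        ((frobFixed F E i).filter fun x => frobNorm F i x ∣ g).card
      = ∑ i ∈ Finset.Icc 1 g.natDegree, ∑ x ∈ (g.map (algebraMap F E)).roots.toFinset,
          if x ^ Fintype.card F ^ i = x ∧ frobNorm F i x ∣ g then 1 else 0 := by
        refine Finset.sum_congr rfl fun i hi => ?_
        rw [filter_frobNorm_dvd_eq_filter_roots hg
          (Nat.one_le_iff_ne_zero.1 (Finset.mem_Icc.1 hi).1), Finset.card_filter]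
    _ = ∑ x ∈ (g.map (algebraMap F E)).roots.toFinset,
          (g.map (algebraMap F E)).roots.count x := by
        rw [Finset.sum_comm]
        refine Finset.sum_congr rfl fun x hx => ?_
        rw [Multiset.mem_toFinset, mem_roots hg', IsRoot.def, eval_map_algebraMap] at hx
        rw [← Finset.card_filter, card_filter_frobNorm_dvd hg hx, count_roots]
    _ = g.natDegree := by
        rw [Multiset.toFinset_sum_count_eq, splits_iff_card_roots.1 (IsAlgClosed.splits _),
          natDegree_map]

/-- The sum of `χ` over the monic polynomials of degree `n`: the `n`-th coefficient of the
L-function of `χ`. -/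
noncomputable def monicSum [CommSemiring R] (χ : F[X] →* R) (n : ℕ) : R :=
  ∑ g ∈ monicsOfDegree F n, χ g

/-- The sum of `χ` over the norms of `X - x` for `x` in the extension of degree `n`: the `n`-th
coefficient of the logarithmic derivative of the L-function of `χ`. -/
noncomputable def frobSum [CommSemiring R] (E : Type*) [Field E] [Algebra F E] (χ : F[X] →* R)
    (n : ℕ) : R :=
  ∑ x ∈ frobFixed F E n, χ (frobNorm F n x)

theorem monicSum_zero [CommSemiring R] (χ : F[X] →* R) : monicSum χ 0 = 1 := by
  rw [monicSum, monicsOfDegree_zero, Finset.sum_singleton, map_one]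

theorem sum_filter_dvd_monicsOfDegree [CommSemiring R] (χ : F[X] →* R) {u : F[X]} (hu : u.Monic)
    {n : ℕ} (hn : u.natDegree ≤ n) :
    ∑ g ∈ (monicsOfDegree F n).filter (u ∣ ·), χ g = χ u * monicSum χ (n - u.natDegree) := by
  rw [monicSum, Finset.mul_sum]
  symm
  refine Finset.sum_bij (fun g _ => u * g) ?_ ?_ ?_ ?_
  · intro g hg
    rw [mem_monicsOfDegree] at hg
    rw [Finset.mem_filter, mem_monicsOfDegree]
    refine ⟨⟨hu.mul hg.1, ?_⟩, dvd_mul_right _ _⟩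
    rw [hu.natDegree_mul hg.1, hg.2]
    omega
  · exact fun g _ g' _ h => mul_left_cancel₀ hu.ne_zero h
  · intro g hg
    rw [Finset.mem_filter, mem_monicsOfDegree] at hg
    obtain ⟨⟨hg, hd⟩, g', rfl⟩ := hg
    have hg' : g'.Monic := hu.of_mul_monic_left hg
    refine ⟨g', mem_monicsOfDegree.2 ⟨hg', ?_⟩, rfl⟩
    rw [hu.natDegree_mul hg'] at hd
    omega
  · exact fun g _ => (map_mul χ u g).symm

theorem frobSum_mul_monicSum [CommSemiring R] (χ : F[X] →* R) {i n : ℕ} (hi : i ≠ 0)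
    (hin : i ≤ n) :
    frobSum E χ i * monicSum χ (n - i) = ∑ g ∈ monicsOfDegree F n,
      (((frobFixed F E i).filter fun x => frobNorm F i x ∣ g).card : R) * χ g := by
  calc frobSum E χ i * monicSum χ (n - i)
      = ∑ x ∈ frobFixed F E i, ∑ g ∈ monicsOfDegree F n,
          if frobNorm F i x ∣ g then χ g else 0 := by
        rw [frobSum, Finset.sum_mul]
        refine Finset.sum_congr rfl fun x hx => ?_
        rw [mem_frobFixed hi] at hx
        rw [← Finset.sum_filter, sum_filter_dvd_monicsOfDegree χ (frobNorm_monic hx)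
          (by rwa [natDegree_frobNorm hx]), natDegree_frobNorm hx]
    _ = _ := by
        rw [Finset.sum_comm]
        refine Finset.sum_congr rfl fun g _ => ?_
        rw [← Finset.sum_filter, Finset.sum_const, nsmul_eq_mul]

theorem natCast_mul_monicSum [IsAlgClosed E] [CommSemiring R] (χ : F[X] →* R) (n : ℕ) :
    (n : R) * monicSum χ n = ∑ i ∈ Finset.Icc 1 n, frobSum E χ i * monicSum χ (n - i) := by
  rw [Finset.sum_congr rfl fun i hi => frobSum_mul_monicSum χ
    (Nat.one_le_iff_ne_zero.1 (Finset.mem_Icc.1 hi).1) (Finset.mem_Icc.1 hi).2, Finset.sum_comm,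
    monicSum, Finset.mul_sum]
  refine Finset.sum_congr rfl fun g hg => ?_
  obtain ⟨hmonic, rfl⟩ := mem_monicsOfDegree.1 hg
  rw [← Finset.sum_mul, ← Nat.cast_sum, sum_card_filter_frobNorm_dvd hmonic.ne_zero]

theorem mulRemainder_mem_monicsOfDegree {h : F[X]} (hh : h.Monic) (a : F[X]) {n : ℕ}
    (hn : h.natDegree ≤ n) {g : F[X]} (hg : g ∈ monicsOfDegree F n) :
    mulRemainder h a g ∈ monicsOfDegree F n := by
  rw [mem_monicsOfDegree] at hg ⊢
  have hlt : ((a * g) %ₘ h - g %ₘ h).degree < g.degree := by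
    refine ((degree_sub_le _ _).trans_lt (max_lt (degree_modByMonic_lt _ hh)
      (degree_modByMonic_lt _ hh))).trans_le ?_
    rw [degree_eq_natDegree hh.ne_zero, degree_eq_natDegree hg.1.ne_zero, hg.2]
    exact_mod_cast hn
  have heq : mulRemainder h a g = g + ((a * g) %ₘ h - g %ₘ h) := by
    rw [mulRemainder]
    linear_combination modByMonic_add_div g h
  rw [heq]
  exact ⟨hg.1.add_of_left hlt,
    (natDegree_eq_of_degree_eq (degree_add_eq_left_of_degree_lt hlt)).trans hg.2⟩

theorem monicSum_eq_zero [CommRing R] [IsDomain R] (χ : F[X] →* R) {h : F[X]} (hh : h.Monic)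
    (hmod : ∀ g u, χ (g + h * u) = χ g) {a : F[X]} (ha : IsCoprime h a) (hχ : χ a ≠ 1) {n : ℕ}
    (hn : h.natDegree ≤ n) : monicSum χ n = 0 := by
  obtain ⟨u, b, hub⟩ := ha
  have hba : h ∣ b * a - 1 := ⟨-u, by linear_combination hub⟩
  have hsum : χ a * monicSum χ n = monicSum χ n := by
    rw [monicSum, Finset.mul_sum]
    refine Finset.sum_nbij' (mulRemainder h a) (mulRemainder h b)
      (fun _ => mulRemainder_mem_monicsOfDegree hh a hn)
      (fun _ => mulRemainder_mem_monicsOfDegree hh b hn)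
      (fun g _ => mulRemainder_mulRemainder hh hba g)
      (fun g _ => mulRemainder_mulRemainder hh (by rwa [mul_comm]) g)
      fun g _ => (map_mulRemainder χ hmod a g).symm
  have : (χ a - 1) * monicSum χ n = 0 := by rw [sub_mul, hsum, one_mul, sub_self]
  exact (mul_eq_zero.1 this).resolve_left (sub_ne_zero.2 hχ)

theorem exists_multiset_frobSum_eq {K : Type*} [Field K] [CharZero K] [IsAlgClosed K]
    [IsAlgClosed E] (χ : F[X] →* K) {h : F[X]} (hh : h.Monic)
    (hmod : ∀ g u, χ (g + h * u) = χ g) {a : F[X]} (ha : IsCoprime h a) (hχ : χ a ≠ 1) :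
    ∃ ω : Multiset K, ω.card = h.natDegree ∧
      ∀ n, 1 ≤ n → frobSum E χ n = -(ω.map (· ^ n)).sum :=
  exists_multiset_eq_neg_sum_pow (monicSum_zero χ)
    (fun _ hn => monicSum_eq_zero χ hh hmod ha hχ hn.le) (natCast_mul_monicSum χ)

end LFunction

section ResultantCharacter

open Polynomial

theorem algebraMap_resultant {F E : Type*} [Field F] [Field E] [Algebra F E] [IsAlgClosed E]
    {f : F[X]} (hf : f.Monic) (g : F[X]) :
    algebraMap F E (f.resultant g) = ((f.aroots E).map fun β => aeval β g).prod := by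
  have h := resultant_eq_prod_eval (f.map (algebraMap F E)) (g.map (algebraMap F E)) g.natDegree
    (natDegree_map_le) (IsAlgClosed.splits _)
  rw [natDegree_map, resultant_map_map, (hf.map _).leadingCoeff, one_pow, one_mul] at h
  rw [h, aroots_def]
  refine congrArg _ (Multiset.map_congr rfl fun β _ => ?_)
  rw [eval_map_algebraMap]

/-- The product over `i` of `χ i (∏ β, g β)`, where `β` runs over the roots of `f i` with
multiplicity: the completely multiplicative function on polynomials whose L-function encodes the
sums of `∏ i, χ i (f i x)`. -/
noncomputable def resChar {F ι : Type*} [Field F] [Fintype ι] {f : ι → F[X]}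
    (hf : ∀ i, (f i).Monic) (χ : ι → MulChar F ℂ) : F[X] →* ℂ where
  toFun g := ∏ i, χ i ((f i).resultant g)
  map_one' := by simp
  map_mul' g g' := by
    have : ∀ i, (f i).resultant (g * g') = (f i).resultant g * (f i).resultant g' := fun i => by
      apply (algebraMap F (AlgebraicClosure F)).injective
      rw [map_mul, algebraMap_resultant (hf i), algebraMap_resultant (hf i),
        algebraMap_resultant (hf i), ← Multiset.prod_map_mul]
      simp
    simp only [this, map_mul, Finset.prod_mul_distrib]

theorem resChar_apply {F ι : Type*} [Field F] [Fintype ι] {f : ι → F[X]} (hf : ∀ i, (f i).Monic)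
    (χ : ι → MulChar F ℂ) (g : F[X]) : resChar hf χ g = ∏ i, χ i ((f i).resultant g) := rfl

theorem resChar_add_mul {F ι : Type*} [Field F] [Fintype ι] {f : ι → F[X]} (hf : ∀ i, (f i).Monic)
    (χ : ι → MulChar F ℂ) (g u : F[X]) :
    resChar hf χ (g + (∏ i, f i) * u) = resChar hf χ g := by
  rw [resChar_apply, resChar_apply]
  refine Finset.prod_congr rfl fun i _ => congrArg _ ?_
  apply (algebraMap F (AlgebraicClosure F)).injective
  rw [algebraMap_resultant (hf i), algebraMap_resultant (hf i)]
  refine congrArg _ (Multiset.map_congr rfl fun β hβ => ?_)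
  have : aeval β (∏ i, f i) = 0 := by
    rw [map_prod]
    exact Finset.prod_eq_zero (Finset.mem_univ i) ((mem_aroots.1 hβ).2)
  rw [map_add, map_mul, this, zero_mul, add_zero]

theorem norm_mulChar_apply_of_isUnit {R : Type*} [CommMonoid R] [Finite Rˣ] (χ : MulChar R ℂ)
    {a : R} (ha : IsUnit a) : ‖χ a‖ = 1 := by
  obtain ⟨u, rfl⟩ := ha
  refine Complex.norm_eq_one_of_pow_eq_one (n := Nat.card Rˣ) ?_ Nat.card_pos.ne'
  rw [← map_pow, ← Units.val_pow_eq_pow_val, pow_card_eq_one', Units.val_one, map_one]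

theorem norm_mulChar_apply_le_one {R : Type*} [CommMonoid R] [Finite Rˣ] (χ : MulChar R ℂ)
    (a : R) : ‖χ a‖ ≤ 1 := by
  by_cases ha : IsUnit a
  · exact (norm_mulChar_apply_of_isUnit χ ha).le
  · rw [χ.map_nonunit ha, norm_zero]
    exact zero_le_one

theorem norm_resChar_le_one {F ι : Type*} [Field F] [Finite F] [Fintype ι] {f : ι → F[X]}
    (hf : ∀ i, (f i).Monic) (χ : ι → MulChar F ℂ) (g : F[X]) : ‖resChar hf χ g‖ ≤ 1 := by
  rw [resChar_apply, norm_prod]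
  exact Finset.prod_le_one (fun _ _ => norm_nonneg _) fun i _ => norm_mulChar_apply_le_one _ _

variable {F E : Type*} [Field F] [Fintype F] [Field E] [Algebra F E]

theorem map_pow_card_pow_aroots [IsAlgClosed E] (f : F[X]) (l : ℕ) :
    (f.aroots E).map (· ^ Fintype.card F ^ l) = f.aroots E := by
  induction l with
  | zero => simp
  | succ l ih =>
    have h1 := (IsAlgClosed.splits (f.map (algebraMap F E))).roots_map
      (FiniteField.frobeniusAlgHom F E : E →+* E)
    have h2 : (f.map (algebraMap F E)).map (FiniteField.frobeniusAlgHom F E : E →+* E) =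
        f.map (algebraMap F E) := by
      rw [Polynomial.map_map, AlgHom.comp_algebraMap]
    rw [h2] at h1
    conv_rhs => rw [aroots_def, h1, ← aroots_def, ← ih, Multiset.map_map]
    refine Multiset.map_congr rfl fun x _ => ?_
    change x ^ _ = FiniteField.frobeniusAlgHom F E (x ^ _)
    rw [FiniteField.coe_frobeniusAlgHom, pow_succ, pow_mul]

theorem algebraMap_resultant_frobNorm [IsAlgClosed E] {f : F[X]} (hf : f.Monic) {n : ℕ} {x : E}
    (hx : x ^ Fintype.card F ^ n = x) :
    algebraMap F E (f.resultant (frobNorm F n x)) =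
      ((f.aroots E).map fun β => (β - x) ^ ∑ l ∈ Finset.range n, Fintype.card F ^ l).prod := by
  rw [algebraMap_resultant hf]
  have h1 : ∀ β : E, aeval β (frobNorm F n x) =
      ∏ l ∈ Finset.range n, (β - x ^ Fintype.card F ^ l) := by
    intro β
    rw [← eval_map_algebraMap, map_frobNorm hx, eval_prod]
    simp
  have h2 : ∀ β : E, (β - x) ^ ∑ l ∈ Finset.range n, Fintype.card F ^ l =
      ∏ l ∈ Finset.range n, (β ^ Fintype.card F ^ l - x ^ Fintype.card F ^ l) := by
    intro β
    rw [← Finset.prod_pow_eq_pow_sum]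
    refine Finset.prod_congr rfl fun l _ => ?_
    simp only [← frobeniusAlgHom_pow_apply (F := F), map_sub]
  simp only [h1, h2, Multiset.prod_map_prod]
  refine Finset.prod_congr rfl fun l _ => ?_
  conv_lhs => rw [← map_pow_card_pow_aroots f l, Multiset.map_map]
  rfl

theorem mem_range_algebraMap_of_pow_card_eq {y : E} (hy : y ^ Fintype.card F = y) :
    y ∈ (algebraMap F E).range := by
  have hy' : y ^ Fintype.card F ^ 1 = y := by rwa [pow_one]
  rw [← minpoly.natDegree_eq_one_iff, ← Nat.dvd_one]
  exact (pow_card_pow_eq_iff_natDegree_minpoly_dvd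
    (isIntegral_of_pow_card_pow_eq one_ne_zero hy') 1).1 hy'

theorem frobFixed_one : frobFixed F E 1 =
    Finset.univ.map ⟨algebraMap F E, (algebraMap F E).injective⟩ := by
  ext x
  rw [mem_frobFixed one_ne_zero, pow_one, Finset.mem_map]
  constructor
  · intro hx
    obtain ⟨a, ha⟩ := mem_range_algebraMap_of_pow_card_eq hx
    exact ⟨a, Finset.mem_univ _, ha⟩
  · rintro ⟨a, -, rfl⟩
    change algebraMap F E a ^ _ = algebraMap F E a
    rw [← map_pow, FiniteField.pow_card]

theorem frobNorm_one_algebraMap {F : Type*} [Field F] [Algebra F E] (a : F) :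
    frobNorm F 1 (algebraMap F E a) = X - C a := by
  rw [frobNorm, minpoly.eq_X_sub_C, natDegree_X_sub_C, Nat.div_one, pow_one]

theorem norm_frobSum_one {ι : Type*} [Fintype ι] {f : ι → F[X]} (hf : ∀ i, (f i).Monic)
    (χ : ι → MulChar F ℂ) :
    ‖frobSum E (resChar hf χ) 1‖ = ‖∑ x : F, ∏ i, χ i ((f i).eval x)‖ := by
  have hres (i : ι) (a : F) :
      (f i).resultant (X - C a) = (-1) ^ (f i).natDegree * (f i).eval a := by
    rw [natDegree_X_sub_C, resultant_X_sub_C_right _ _ _ le_rfl]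
  have hsum : frobSum E (resChar hf χ) 1 =
      (∏ i, χ i ((-1) ^ (f i).natDegree)) * ∑ x : F, ∏ i, χ i ((f i).eval x) := by
    rw [frobSum, frobFixed_one, Finset.sum_map, Finset.mul_sum]
    refine Finset.sum_congr rfl fun a _ => ?_
    rw [Function.Embedding.coeFn_mk, frobNorm_one_algebraMap, resChar_apply,
      ← Finset.prod_mul_distrib]
    exact Finset.prod_congr rfl fun i _ => by rw [hres, map_mul]
  rw [hsum, norm_mul, norm_prod, Finset.prod_eq_one, one_mul]
  exact fun i _ => norm_mulChar_apply_of_isUnit _ ((isUnit_one.neg).pow _)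

theorem exists_forall_pow_card_pow_eq (E : Type*) [Field E] [Algebra F E] {h : F[X]} (hh : h ≠ 0) :
    ∃ e : ℕ, e ≠ 0 ∧ ∀ β : E, aeval β h = 0 → ∀ s, β ^ Fintype.card F ^ (e * s) = β := by
  refine ⟨h.natDegree.factorial, h.natDegree.factorial_ne_zero, fun β hβ s => ?_⟩
  have hint : IsIntegral F β := IsAlgebraic.isIntegral ⟨h, hh, hβ⟩
  exact (pow_card_pow_eq_iff_natDegree_minpoly_dvd hint _).2 (dvd_mul_of_dvd_left
    (Nat.dvd_factorial (minpoly.natDegree_pos hint)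
      (natDegree_le_of_dvd (minpoly.dvd F β hβ) hh)) s)

end ResultantCharacter

section TrivialCharacter

open Polynomial

variable {F E : Type*} [Field F] [Fintype F] [Field E] [Algebra F E]

theorem isCoprime_frobNorm {h : F[X]} {n : ℕ} {x : E} (hx : x ^ Fintype.card F ^ n = x)
    (hxh : aeval x h ≠ 0) : IsCoprime h (frobNorm F n x) := by
  rcases eq_or_ne n 0 with rfl | hn
  · rw [frobNorm, Nat.zero_div, pow_zero]
    exact isCoprime_one_right
  refine IsCoprime.pow_right (IsCoprime.symm ?_)
  rw [(minpoly.irreducible (isIntegral_of_pow_card_pow_eq hn hx)).coprime_iff_not_dvd]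
  rintro ⟨u, rfl⟩
  rw [map_mul, minpoly.aeval, zero_mul] at hxh
  exact hxh rfl

theorem norm_frobSum_sub_card_le [IsAlgClosed E] {χ : F[X] →* ℂ} (hχ : ∀ g, ‖χ g‖ ≤ 1)
    {h : F[X]} (hh : h ≠ 0) (hone : ∀ g, IsCoprime h g → χ g = 1) {n : ℕ} (hn : n ≠ 0) :
    ‖frobSum E χ n - (Fintype.card F : ℂ) ^ n‖ ≤ 2 * h.natDegree := by
  have hroots : ((h.aroots E).toFinset.card : ℝ) ≤ h.natDegree := by
    exact_mod_cast (Multiset.toFinset_card_le _).trans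
      ((card_roots' _).trans natDegree_map_le)
  have hsum : frobSum E χ n - (Fintype.card F : ℂ) ^ n =
      ∑ x ∈ (frobFixed F E n).filter (· ∈ (h.aroots E).toFinset), (χ (frobNorm F n x) - 1) := by
    rw [Finset.sum_filter_of_ne]
    · simp [frobSum, card_frobFixed hn]
    · intro x hx hne
      by_contra hroot
      refine hne (sub_eq_zero.2 (hone _ (isCoprime_frobNorm ((mem_frobFixed hn).1 hx) ?_)))
      rwa [Multiset.mem_toFinset, mem_aroots, not_and, imp_iff_right hh] at hroot
  have hterm (x : E) : ‖χ (frobNorm F n x) - 1‖ ≤ 2 := by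
    refine (norm_sub_le _ _).trans ?_
    rw [norm_one]
    linarith [hχ (frobNorm F n x)]
  rw [hsum]
  refine (norm_sum_le_of_le _ fun x _ => hterm x).trans ?_
  rw [Finset.sum_const, nsmul_eq_mul, mul_comm]
  have : (((frobFixed F E n).filter (· ∈ (h.aroots E).toFinset)).card : ℝ) ≤
      (h.aroots E).toFinset.card := by
    exact_mod_cast Finset.card_le_card fun x hx => (Finset.mem_filter.1 hx).2
  linarith

theorem exists_isCoprime_ne_one_of_norm_frobSum_le [IsAlgClosed E] {χ : F[X] →* ℂ}
    (hχ : ∀ g, ‖χ g‖ ≤ 1) {h : F[X]} (hh : h ≠ 0) {C : ℝ} {e N : ℕ} (he : e ≠ 0)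
    (hC : ∀ s, N ≤ s → ‖frobSum E χ (e * s)‖ ≤ C * √(Fintype.card F) ^ (e * s)) :
    ∃ g, IsCoprime h g ∧ χ g ≠ 1 := by
  by_contra! hone
  have hq : 1 < √(Fintype.card F : ℝ) := by
    rw [Real.lt_sqrt zero_le_one, one_pow]
    exact_mod_cast Fintype.one_lt_card
  obtain ⟨s₀, hs₀⟩ := pow_unbounded_of_one_lt (C + 2 * h.natDegree) hq
  set s := max (max s₀ N) 1
  set y := √(Fintype.card F : ℝ) ^ (e * s) with hy
  have hlarge : C + 2 * h.natDegree < y := hs₀.trans_le (pow_le_pow_right₀ hq.le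
    ((show s₀ ≤ s by omega).trans (Nat.le_mul_of_pos_left _ (Nat.pos_of_ne_zero he))))
  have hy1 : 1 ≤ y := one_le_pow₀ hq.le
  have hcard : ‖(Fintype.card F : ℂ) ^ (e * s)‖ = y ^ 2 := by
    rw [hy, pow_right_comm, Real.sq_sqrt (Nat.cast_nonneg _), norm_pow, Complex.norm_natCast]
  have hdiff := norm_frobSum_sub_card_le hχ hh hone (E := E) (mul_ne_zero he (by omega : s ≠ 0))
  have hsq : y ^ 2 ≤ C * y + 2 * h.natDegree := by
    have := norm_sub_norm_le ((Fintype.card F : ℂ) ^ (e * s)) (frobSum E χ (e * s))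
    rw [norm_sub_rev, hcard] at this
    linarith [hC s (by omega)]
  have : (0 : ℝ) ≤ h.natDegree := Nat.cast_nonneg _
  nlinarith

end TrivialCharacter

section PatternCharacter

open Polynomial

/-- As `Φ` has mean zero, a constant may be subtracted from all fibre sizes of `v`; taking their
common upper bound makes all deviations have the same sign, so no lower bound is needed. -/
theorem norm_sum_comp_le {V X Z : Type*} [NormedAddCommGroup V] [NormedSpace ℝ V] [Fintype Z]
    [DecidableEq Z] [Nonempty Z] {Φ : Z → V} (hΦ : ∀ z, ‖Φ z‖ ≤ 1) (hsum : ∑ z, Φ z = 0)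
    (T : Finset X) (v : X → Z) {M : ℝ}
    (hM : ∀ z, ((T.filter fun x => v x = z).card : ℝ) * Fintype.card Z ≤ M) :
    ‖∑ x ∈ T, Φ (v x)‖ ≤ M - T.card := by
  set c : Z → ℝ := fun z => (T.filter fun x => v x = z).card with hc
  set a : ℝ := M / Fintype.card Z with ha
  have hZ : (0 : ℝ) < Fintype.card Z := by exact_mod_cast Fintype.card_pos
  have hca (z : Z) : 0 ≤ a - c z := sub_nonneg.2 ((le_div_iff₀ hZ).2 (hM z))
  have hdev : ∑ x ∈ T, Φ (v x) = ∑ z, (c z - a) • Φ z := by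
    simp only [sub_smul, Finset.sum_sub_distrib, ← Finset.smul_sum, hsum, smul_zero, sub_zero]
    rw [← Finset.sum_fiberwise T v]
    refine Finset.sum_congr rfl fun z _ => ?_
    rw [Finset.sum_congr rfl (g := fun _ => Φ z) fun x hx => by rw [(Finset.mem_filter.1 hx).2],
      Finset.sum_const, hc, Nat.cast_smul_eq_nsmul]
  have hcard : (T.card : ℝ) = ∑ z, c z := by
    simp only [hc]
    exact_mod_cast Finset.card_eq_sum_card_fiberwise (s := T) (f := v) (t := Finset.univ)
      fun x _ => Finset.mem_coe.2 (Finset.mem_univ _)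
  calc ‖∑ x ∈ T, Φ (v x)‖ ≤ ∑ z, (a - c z) := by
        rw [hdev]
        refine (norm_sum_le _ _).trans (Finset.sum_le_sum fun z _ => ?_)
        rw [norm_smul, Real.norm_eq_abs, abs_sub_comm, abs_of_nonneg (hca z)]
        exact mul_le_of_le_one_right (hca z) (hΦ z)
    _ = M - T.card := by
        rw [Finset.sum_sub_distrib, ← hcard, Finset.sum_const, nsmul_eq_mul, Finset.card_univ, ha,
          mul_div_cancel₀ _ hZ.ne']

/-- The value of `resChar` at `frobNorm n x` as a function of the norms `z b` of `b - x`, where `b`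
runs over a finite set `B` containing all roots of all `f i`. -/
noncomputable def patternChar {F E ι : Type*} [Field F] [Field E] [Algebra F E] [Fintype ι]
    (f : ι → F[X]) (χ : ι → MulChar F ℂ) (B : Finset E) (z : B → Fˣ) : ℂ :=
  ∏ i, χ i ((∏ b : B, z b ^ ((f i).aroots E).count (b : E) : Fˣ) : F)

theorem patternChar_mul {F E ι : Type*} [Field F] [Field E] [Algebra F E] [Fintype ι]
    (f : ι → F[X]) (χ : ι → MulChar F ℂ) (B : Finset E) (z z' : B → Fˣ) :
    patternChar f χ B (z * z') = patternChar f χ B z * patternChar f χ B z' := by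
  simp only [patternChar, Pi.mul_apply, mul_pow, Finset.prod_mul_distrib, Units.val_mul, map_mul]

theorem norm_patternChar_le_one {F E ι : Type*} [Field F] [Finite F] [Field E] [Algebra F E]
    [Fintype ι] (f : ι → F[X]) (χ : ι → MulChar F ℂ) (B : Finset E) (z : B → Fˣ) :
    ‖patternChar f χ B z‖ ≤ 1 := by
  rw [patternChar, norm_prod]
  exact Finset.prod_le_one (fun _ _ => norm_nonneg _) fun i _ => norm_mulChar_apply_le_one _ _

theorem patternChar_mulSingle {F E ι : Type*} [Field F] [Field E] [Algebra F E] [Fintype ι]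
    (f : ι → F[X]) (χ : ι → MulChar F ℂ) {B : Finset E} (b : B) (u : Fˣ) :
    patternChar f χ B (Pi.mulSingle b u) =
      ∏ i, χ i ((u ^ ((f i).aroots E).count (b : E) : Fˣ) : F) := by
  refine Finset.prod_congr rfl fun i _ => ?_
  rw [Finset.prod_eq_single b (fun c _ hc => by rw [Pi.mulSingle_eq_of_ne hc, one_pow])
    fun h => absurd (Finset.mem_univ _) h, Pi.mulSingle_eq_same]

theorem sum_patternChar_eq_zero {F E ι : Type*} [Field F] [Fintype F] [Field E] [Algebra F E]
    [Fintype ι] {f : ι → F[X]} {χ : ι → MulChar F ℂ} {i₀ : ι}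
    (hχ : χ i₀ ≠ 1) {β₀ : E} (h₀ : ((f i₀).aroots E).count β₀ = 1)
    (h₁ : ∀ i, i ≠ i₀ → χ i ≠ 1 → ((f i).aroots E).count β₀ = 0) {B : Finset E} (hB : β₀ ∈ B) :
    ∑ z, patternChar f χ B z = 0 := by
  obtain ⟨u, hu⟩ := MulChar.ne_one_iff.1 hχ
  set z₀ : B → Fˣ := Pi.mulSingle ⟨β₀, hB⟩ u with hz₀
  have hval : patternChar f χ B z₀ = χ i₀ u := by
    rw [hz₀, patternChar_mulSingle, Finset.prod_eq_single i₀]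
    · rw [h₀, pow_one]
    · intro i _ hi
      by_cases hχi : χ i = 1
      · rw [hχi, MulChar.one_apply_coe]
      · rw [h₁ i hi hχi, pow_zero, Units.val_one, map_one]
    · exact fun h => absurd (Finset.mem_univ _) h
  have htranslate : χ i₀ u * ∑ z, patternChar f χ B z = ∑ z, patternChar f χ B z := by
    rw [← hval, Finset.mul_sum]
    simp only [← patternChar_mul]
    exact Equiv.sum_comp (Equiv.mulLeft z₀) _
  have : (χ i₀ u - 1) * ∑ z, patternChar f χ B z = 0 := by
    rw [sub_mul, htranslate, one_mul, sub_self]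
  exact (mul_eq_zero.1 this).resolve_left (sub_ne_zero.2 hu)

variable {F E ι : Type*} [Field F] [Fintype F] [Field E] [Algebra F E]

theorem resChar_frobNorm_eq_patternChar [IsAlgClosed E] [Fintype ι]
    {f : ι → F[X]} (hf : ∀ i, (f i).Monic)
    (χ : ι → MulChar F ℂ) {B : Finset E} (hB : ∀ i, (f i).aroots E ⊆ B.val) {n : ℕ} {x : E}
    (hx : x ^ Fintype.card F ^ n = x) {z : B → Fˣ}
    (hz : ∀ b : B, algebraMap F E (z b) = (b - x) ^ ∑ l ∈ Finset.range n, Fintype.card F ^ l) :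
    resChar hf χ (frobNorm F n x) = patternChar f χ B z := by
  rw [resChar_apply, patternChar]
  refine Finset.prod_congr rfl fun i _ => congrArg _ ((algebraMap F E).injective ?_)
  rw [algebraMap_resultant_frobNorm (hf i) hx, Units.coe_prod, map_prod,
    Finset.prod_multiset_map_count]
  simp only [Units.val_pow_eq_pow_val, map_pow, hz]
  rw [Finset.prod_coe_sort B
    (fun b => ((b - x) ^ ∑ l ∈ Finset.range n, Fintype.card F ^ l) ^ ((f i).aroots E).count b)]
  refine Finset.prod_subset (fun b hb => hB i (Multiset.mem_toFinset.1 hb)) fun b _ hb => ?_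
  rw [Multiset.count_eq_zero_of_notMem fun h => hb (Multiset.mem_toFinset.2 h), pow_zero]

theorem geomSum_mul_card_sub_one (F : Type*) [Field F] [Fintype F] (n : ℕ) :
    (∑ l ∈ Finset.range n, Fintype.card F ^ l) * (Fintype.card F - 1) + 1 =
      Fintype.card F ^ n := by
  obtain ⟨m, hm⟩ := Nat.exists_eq_succ_of_ne_zero (Fintype.card_ne_zero (α := F))
  rw [hm, Nat.succ_sub_one]
  exact geom_sum_mul_add m n

theorem exists_units_algebraMap_eq_pow {n : ℕ} {y : E} (hy : y ^ Fintype.card F ^ n = y)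
    (hy0 : y ≠ 0) :
    ∃ u : Fˣ, algebraMap F E u = y ^ ∑ l ∈ Finset.range n, Fintype.card F ^ l := by
  have hD := geomSum_mul_card_sub_one F n
  set D := ∑ l ∈ Finset.range n, Fintype.card F ^ l
  have hone : y ^ (D * (Fintype.card F - 1)) = 1 := by
    rw [← hD, pow_succ] at hy
    exact (mul_eq_right₀ hy0).1 hy
  have hfix : (y ^ D) ^ Fintype.card F = y ^ D := by
    conv_lhs => rw [← Nat.sub_add_cancel (Fintype.card_pos (α := F)), pow_succ, ← pow_mul, hone,
      one_mul]
  obtain ⟨a, ha⟩ := mem_range_algebraMap_of_pow_card_eq (F := F) hfix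
  have ha0 : a ≠ 0 := by
    rintro rfl
    rw [map_zero] at ha
    exact pow_ne_zero D hy0 ha.symm
  exact ⟨Units.mk0 a ha0, ha⟩

theorem exists_norm_pattern {B : Finset E} {n : ℕ} (hB : ∀ b ∈ B, b ^ Fintype.card F ^ n = b)
    {x : E} (hx : x ^ Fintype.card F ^ n = x) (hxB : x ∉ B) :
    ∃ z : B → Fˣ, ∀ b : B,
      algebraMap F E (z b) = (b - x) ^ ∑ l ∈ Finset.range n, Fintype.card F ^ l := by
  refine Classical.skolem.1 fun b : B =>
    exists_units_algebraMap_eq_pow ?_ (sub_ne_zero.2 fun hbx : (b : E) = x => hxB (hbx ▸ b.2))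
  rw [← frobeniusAlgHom_pow_apply, map_sub, frobeniusAlgHom_pow_apply, frobeniusAlgHom_pow_apply,
    hB b b.2, hx]

theorem exists_card_mul_le_of_norm_pattern [IsAlgClosed E] (B : Finset E) :
    ∃ C₀ N₀ : ℕ, ∀ s, N₀ ≤ s → ∀ (z : B → Fˣ) (T : Finset E),
      (∀ x ∈ T, x ^ Fintype.card F ^ (2 * s) = x ∧ x ∉ B ∧ ∀ b : B,
        algebraMap F E (z b) = (b - x) ^ ∑ l ∈ Finset.range (2 * s), Fintype.card F ^ l) →
      T.card * Fintype.card (B → Fˣ) ≤ Fintype.card F ^ (2 * s) + C₀ * Fintype.card F ^ s := by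
  obtain ⟨p, hp⟩ := CharP.exists F
  obtain ⟨a, hpp, ha⟩ := FiniteField.card F p
  have : Fact p.Prime := ⟨hpp⟩
  have : CharP E p := charP_of_injective_algebraMap (algebraMap F E).injective p
  have : NeZero (Fintype.card F - 1) := ⟨Nat.sub_ne_zero_of_lt Fintype.one_lt_card⟩
  have hm : ((Fintype.card F - 1 : ℕ) : E) ≠ 0 := by
    rw [Nat.cast_sub Fintype.one_lt_card.le, ← map_natCast (algebraMap F E),
      Nat.cast_card_eq_zero, map_zero, Nat.cast_one, zero_sub]
    exact neg_ne_zero.2 one_ne_zero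
  obtain ⟨C₀, N₀, hC⟩ := exists_card_mul_le_of_pow_eq p (b := ((↑) : B → E))
    Subtype.val_injective hm
  have hpow (n : ℕ) : Fintype.card F ^ n = p ^ (a * n) := by rw [ha, pow_mul]
  have hpow2 (s : ℕ) : Fintype.card F ^ (2 * s) = p ^ (2 * (a * s)) := by
    rw [hpow, Nat.mul_left_comm]
  refine ⟨C₀, N₀, fun s hs z T hT => ?_⟩
  set D := ∑ l ∈ Finset.range (2 * s), Fintype.card F ^ l
  have hN : N₀ ≤ p ^ (a * s) :=
    hs.trans ((Nat.le_mul_of_pos_left s a.pos).trans (Nat.lt_pow_self hpp.one_lt).le)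
  rw [Fintype.card_fun, Fintype.card_units, hpow2, hpow]
  refine hC (a * s) D hN (by rw [← hpow2]; exact geomSum_mul_card_sub_one F _)
    (fun b => (-1) ^ D * algebraMap F E (z b)) T fun x hx => ?_
  obtain ⟨hfix, hxB, hz⟩ := hT x hx
  refine ⟨by rwa [← hpow2], fun b => ⟨fun hxb => hxB (hxb ▸ b.2), ?_⟩⟩
  rw [hz b, ← mul_pow]
  congr 1
  ring

theorem exists_norm_sum_resChar_le [IsAlgClosed E] [Fintype ι] {f : ι → F[X]}
    (hf : ∀ i, (f i).Monic) {χ : ι → MulChar F ℂ} {i₀ : ι} (hχ : χ i₀ ≠ 1) {β₀ : E}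
    (h₀ : ((f i₀).aroots E).count β₀ = 1)
    (h₁ : ∀ i, i ≠ i₀ → χ i ≠ 1 → ((f i).aroots E).count β₀ = 0) {B : Finset E}
    (hB : ∀ i, (f i).aroots E ⊆ B.val) :
    ∃ C₀ N₀ : ℕ, ∀ s, N₀ ≤ s → (∀ b ∈ B, b ^ Fintype.card F ^ (2 * s) = b) →
      ∀ T : Finset E, (∀ x ∈ T, x ^ Fintype.card F ^ (2 * s) = x ∧ x ∉ B) →
      ‖∑ x ∈ T, resChar hf χ (frobNorm F (2 * s) x)‖ ≤
        (Fintype.card F : ℝ) ^ (2 * s) + C₀ * (Fintype.card F : ℝ) ^ s - T.card := by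
  obtain ⟨C₀, N₀, hC⟩ := exists_card_mul_le_of_norm_pattern (F := F) B
  refine ⟨C₀, N₀, fun s hs hfix T hT => ?_⟩
  have hpat : ∀ x ∈ T, ∃ z : B → Fˣ, ∀ b : B,
      algebraMap F E (z b) = (b - x) ^ ∑ l ∈ Finset.range (2 * s), Fintype.card F ^ l :=
    fun x hx => exists_norm_pattern hfix (hT x hx).1 (hT x hx).2
  choose! v hv using hpat
  rw [Finset.sum_congr rfl fun x hx =>
    resChar_frobNorm_eq_patternChar hf χ hB (hT x hx).1 (hv x hx)]
  have hβ₀ : β₀ ∈ B := hB i₀ (Multiset.one_le_count_iff_mem.1 h₀.ge)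
  refine norm_sum_comp_le (norm_patternChar_le_one f χ B)
    (sum_patternChar_eq_zero hχ h₀ h₁ hβ₀) T v fun z => ?_
  norm_cast
  refine hC s hs z _ fun x hx => ?_
  obtain ⟨hxT, rfl⟩ := Finset.mem_filter.1 hx
  exact ⟨(hT x hxT).1, (hT x hxT).2, hv x hxT⟩

end PatternCharacter

section WeilBound

open Polynomial

variable {F E ι : Type*} [Field F] [Fintype F] [Field E] [Algebra F E] [IsAlgClosed E] [Fintype ι]
  {f : ι → F[X]} (hf : ∀ i, (f i).Monic) {χ : ι → MulChar F ℂ} {i₀ : ι} (hχ : χ i₀ ≠ 1) {β₀ : E}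
  (h₀ : ((f i₀).aroots E).count β₀ = 1)
  (h₁ : ∀ i, i ≠ i₀ → χ i ≠ 1 → ((f i).aroots E).count β₀ = 0)

include hf hχ h₀ h₁

theorem exists_norm_frobSum_le :
    ∃ (C : ℝ) (e N : ℕ), e ≠ 0 ∧ ∀ s, N ≤ s →
      ‖frobSum E (resChar hf χ) (e * s)‖ ≤ C * √(Fintype.card F) ^ (e * s) := by
  set q := Fintype.card F
  have hh : ∏ i, f i ≠ 0 := (monic_prod_of_monic _ _ fun i _ => hf i).ne_zero
  obtain ⟨e, he0, he⟩ := exists_forall_pow_card_pow_eq E hh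
  set B : Finset E := ((∏ i, f i).aroots E).toFinset with hBdef
  have hB : ∀ i, (f i).aroots E ⊆ B.val := by
    intro i b hb
    rw [Finset.mem_val, hBdef, Multiset.mem_toFinset, mem_aroots, map_prod]
    exact ⟨hh, Finset.prod_eq_zero (Finset.mem_univ i) (mem_aroots.1 hb).2⟩
  obtain ⟨C₀, N₀, hC⟩ := exists_norm_sum_resChar_le hf hχ h₀ h₁ hB
  refine ⟨C₀ + 2 * B.card, 2 * e, N₀ + 1, by simp [he0], fun s hs => ?_⟩
  have hes : e * s ≠ 0 := mul_ne_zero he0 (by omega)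
  rw [mul_assoc, pow_mul √_, Real.sq_sqrt (Nat.cast_nonneg _)]
  have hfix : ∀ b ∈ B, b ^ q ^ (2 * (e * s)) = b := fun b hb => by
    rw [mul_left_comm]
    exact he b (mem_aroots.1 (Multiset.mem_toFinset.1 hb)).2 _
  set T := (frobFixed F E (2 * (e * s))).filter (· ∉ B) with hT
  set S := (frobFixed F E (2 * (e * s))).filter (¬ · ∉ B) with hS
  have hmain := hC (e * s) ((Nat.le_of_succ_le hs).trans
    (Nat.le_mul_of_pos_left s (Nat.pos_of_ne_zero he0))) hfix T fun x hx => by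
      rwa [hT, Finset.mem_filter, mem_frobFixed (by positivity)] at hx
  have hScard : (S.card : ℝ) ≤ B.card := by
    exact_mod_cast Finset.card_le_card fun x hx => not_not.1 (Finset.mem_filter.1 hx).2
  have hsmall : ‖∑ x ∈ S, resChar hf χ (frobNorm F (2 * (e * s)) x)‖ ≤ S.card := by
    refine (norm_sum_le_of_le _ fun x _ => norm_resChar_le_one hf χ _).trans ?_
    rw [Finset.sum_const, nsmul_eq_mul, mul_one]
  have hcard : (T.card : ℝ) + S.card = (q : ℝ) ^ (2 * (e * s)) := by
    rw [← Nat.cast_add, hT, hS, Finset.card_filter_add_card_filter_not,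
      card_frobFixed (by positivity), Nat.cast_pow]
  have hone : (1 : ℝ) ≤ (q : ℝ) ^ (e * s) :=
    one_le_pow₀ (by exact_mod_cast (Fintype.one_lt_card (α := F)).le)
  have hle : (B.card : ℝ) ≤ B.card * (q : ℝ) ^ (e * s) :=
    le_mul_of_one_le_right (Nat.cast_nonneg _) hone
  rw [frobSum, ← Finset.sum_filter_add_sum_filter_not _ (· ∉ B)]
  refine (norm_add_le _ _).trans ((add_le_add hmain hsmall).trans ?_)
  linarith

/-- Weil's bound for multiplicative character sums. The point `β₀`, a simple root of exactly one of
the polynomials with a nontrivial character, keeps the product of characters from degenerating. -/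
theorem norm_sum_prod_mulChar_le :
    ‖∑ x : F, ∏ i, χ i ((f i).eval x)‖ ≤ (∑ i, (f i).natDegree : ℕ) * √(Fintype.card F) := by
  have hmonic : (∏ i, f i).Monic := monic_prod_of_monic _ _ fun i _ => hf i
  obtain ⟨C, e, N, he, hC⟩ := exists_norm_frobSum_le hf hχ h₀ h₁
  obtain ⟨g, hg, hgχ⟩ := exists_isCoprime_ne_one_of_norm_frobSum_le (norm_resChar_le_one hf χ)
    hmonic.ne_zero he hC
  obtain ⟨ω, hω, hS⟩ := exists_multiset_frobSum_eq (E := E) (resChar hf χ) hmonic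
    (resChar_add_mul hf χ) hg hgχ
  have hq : 0 < √(Fintype.card F : ℝ) := Real.sqrt_pos.2 (by exact_mod_cast Fintype.card_pos)
  have hle : ∀ a ∈ ω, ‖a‖ ≤ √(Fintype.card F : ℝ) := fun a ha => by
    refine norm_le_of_norm_sum_pow_mul_le (C := C) (e := e) (N := N + 1) hq he (fun s hs => ?_) ha
    rw [← norm_neg, ← hS _ (Nat.mul_pos (Nat.pos_of_ne_zero he) (by omega))]
    exact hC s (by omega)
  calc ‖∑ x : F, ∏ i, χ i ((f i).eval x)‖ = ‖ω.sum‖ := by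
        rw [← norm_frobSum_one (E := E) hf χ, hS 1 le_rfl, norm_neg]
        simp only [pow_one, Multiset.map_id']
    _ ≤ (ω.map (‖·‖)).sum := norm_multiset_sum_le ω
    _ ≤ ω.card • √(Fintype.card F : ℝ) := by
        rw [← Multiset.card_map (‖·‖) ω]
        refine Multiset.sum_le_card_nsmul _ _ fun x hx => ?_
        obtain ⟨a, ha, rfl⟩ := Multiset.mem_map.1 hx
        exact hle a ha
    _ = (∑ i, (f i).natDegree : ℕ) * √(Fintype.card F) := by
        rw [nsmul_eq_mul, hω, natDegree_prod_of_monic _ _ fun i _ => hf i]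

end WeilBound

section ShiftPoly

open Polynomial

theorem exists_pow_eq_neg_one {E : Type*} [Field E] [IsAlgClosed E] {j : ℕ} (hj : (j : E) ≠ 0) :
    ∃ β : E, β ^ j = -1 ∧ ∀ i, 0 < i → i < j → β ^ i ≠ -1 := by
  have hj0 : 0 < j := Nat.pos_of_ne_zero (by rintro rfl; exact hj Nat.cast_zero)
  by_cases htwo : (2 : E) = 0
  · have : NeZero (j : E) := ⟨hj⟩
    have hneg : (-1 : E) = 1 := by linear_combination htwo * (-1)
    obtain ⟨β, hβ⟩ := HasEnoughRootsOfUnity.exists_primitiveRoot E j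
    refine ⟨β, by rw [hβ.pow_eq_one, hneg], fun i hi hij h => ?_⟩
    exact hβ.pow_ne_one_of_pos_of_lt hi.ne' hij (h.trans hneg)
  · have : NeZero ((2 * j : ℕ) : E) := ⟨by push_cast; exact mul_ne_zero htwo hj⟩
    obtain ⟨β, hβ⟩ := HasEnoughRootsOfUnity.exists_primitiveRoot E (2 * j)
    refine ⟨β, ?_, fun i hi hij h => ?_⟩
    · have hsq : (β ^ j) ^ 2 = 1 := by rw [← pow_mul, mul_comm, hβ.pow_eq_one]
      exact (sq_eq_one_iff.1 hsq).resolve_left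
        (hβ.pow_ne_one_of_pos_of_lt hj0.ne' (by omega))
    · refine hβ.pow_ne_one_of_pos_of_lt (l := 2 * i) (by omega) (by omega) ?_
      rw [mul_comm, pow_mul, h, neg_one_sq]

variable (F : Type*) [Field F]

/-- The polynomials whose values at `g` have to lie in the subgroup: `X` for the term `g` itself,
and `X ^ j + 1` for the sum of two terms of the progression `g ^ i` at distance `j`. -/
noncomputable def shiftPoly (j : ℕ) : F[X] := if j = 0 then X else X ^ j + 1

theorem monic_shiftPoly (j : ℕ) : (shiftPoly F j).Monic := by
  unfold shiftPoly
  split_ifs with h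
  · exact monic_X
  · exact monic_X_pow_add_C (1 : F) h

theorem natDegree_shiftPoly_le (j : ℕ) : (shiftPoly F j).natDegree ≤ j + 1 := by
  unfold shiftPoly
  split_ifs with h
  · exact natDegree_X_le.trans (Nat.le_add_left 1 j)
  · exact (natDegree_X_pow_add_C (r := (1 : F))).le.trans j.le_succ

/-- The exponents `j ≤ k` for which `shiftPoly F j` is separable. -/
noncomputable def shiftSet (k : ℕ) : Finset ℕ :=
  (Finset.range (k + 1)).filter fun j => j = 0 ∨ (j : F) ≠ 0

theorem sum_natDegree_shiftPoly_le (k : ℕ) :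
    ∑ i : shiftSet F k, (shiftPoly F i).natDegree ≤ (k + 1) ^ 2 := by
  rw [Finset.sum_coe_sort (shiftSet F k) (fun i => (shiftPoly F i).natDegree)]
  calc ∑ i ∈ shiftSet F k, (shiftPoly F i).natDegree
      ≤ ∑ i ∈ Finset.range (k + 1), (shiftPoly F i).natDegree :=
        Finset.sum_le_sum_of_subset (Finset.filter_subset _ _)
    _ ≤ ∑ i ∈ Finset.range (k + 1), (k + 1) := Finset.sum_le_sum fun i hi =>
        (natDegree_shiftPoly_le F i).trans (Finset.mem_range.1 hi)
    _ = (k + 1) ^ 2 := by rw [Finset.sum_const, Finset.card_range, smul_eq_mul, sq]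

variable {F} {E : Type*} [Field E] [Algebra F E]

theorem mem_aroots_shiftPoly {i : ℕ} (hi : i ≠ 0) {β : E} :
    β ∈ (shiftPoly F i).aroots E ↔ β ^ i = -1 := by
  rw [mem_aroots, and_iff_right (monic_shiftPoly F i).ne_zero, shiftPoly, if_neg hi, map_add,
    map_pow, aeval_X, map_one, eq_neg_iff_add_eq_zero]

theorem exists_count_aroots_shiftPoly [IsAlgClosed E] {j : ℕ} (hj : j = 0 ∨ (j : F) ≠ 0) :
    ∃ β : E, ((shiftPoly F j).aroots E).count β = 1 ∧
      ∀ i < j, ((shiftPoly F i).aroots E).count β = 0 := by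
  rcases eq_or_ne j 0 with rfl | hj0
  · refine ⟨0, ?_, fun i hi => absurd hi i.not_lt_zero⟩
    rw [shiftPoly, if_pos rfl, aroots_X, Multiset.count_singleton_self]
  have hjF : (j : F) ≠ 0 := hj.resolve_left hj0
  obtain ⟨β, hβ, hmin⟩ := exists_pow_eq_neg_one (E := E) (j := j)
    (by rw [← map_natCast (algebraMap F E)]; exact (_root_.map_ne_zero _).2 hjF)
  refine ⟨β, Multiset.count_eq_one_of_mem ?_ ((mem_aroots_shiftPoly hj0).2 hβ), fun i hij => ?_⟩
  · refine (nodup_aroots_iff_of_splits (monic_shiftPoly F _).ne_zero (IsAlgClosed.splits _)).2 ?_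
    rw [shiftPoly, if_neg hj0]
    simpa only [map_neg, map_one, sub_neg_eq_add] using
      separable_X_pow_sub_C (-1 : F) hjF (neg_ne_zero.2 one_ne_zero)
  · rw [Multiset.count_eq_zero]
    rcases eq_or_ne i 0 with rfl | hi0
    · rw [shiftPoly, if_pos rfl, aroots_X, Multiset.mem_singleton]
      rintro rfl
      rw [zero_pow hj0] at hβ
      exact neg_ne_zero.2 one_ne_zero hβ.symm
    · exact mt (mem_aroots_shiftPoly hi0).1 (hmin i (Nat.pos_of_ne_zero hi0) hij)

theorem norm_sum_prod_shiftPoly_le [Fintype F] {k : ℕ} {χ : shiftSet F k → MulChar F ℂ}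
    (hχ : χ ≠ 1) :
    ‖∑ x : F, ∏ i, χ i ((shiftPoly F i).eval x)‖ ≤ ((k + 1) ^ 2 : ℕ) * √(Fintype.card F) := by
  obtain ⟨i₁, hi₁⟩ := Function.ne_iff.1 hχ
  obtain ⟨i₀, hi₀, hmax⟩ := Finset.exists_max_image
    (Finset.univ.filter fun i => χ i ≠ 1) (fun i => (i : ℕ))
    ⟨i₁, Finset.mem_filter.2 ⟨Finset.mem_univ _, hi₁⟩⟩
  obtain ⟨β, hβ, hβ'⟩ := exists_count_aroots_shiftPoly (E := AlgebraicClosure F)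
    (Finset.mem_filter.1 i₀.2).2
  have hlt : ∀ i, i ≠ i₀ → χ i ≠ 1 → (i : ℕ) < i₀ := fun i hne hi =>
    lt_of_le_of_ne (hmax i (Finset.mem_filter.2 ⟨Finset.mem_univ _, hi⟩))
      fun h => hne (Subtype.ext h)
  refine (norm_sum_prod_mulChar_le (fun i : shiftSet F k => monic_shiftPoly F i)
    (Finset.mem_filter.1 hi₀).2 hβ fun i hne hi => hβ' i (hlt i hne hi)).trans ?_
  gcongr
  exact sum_natDegree_shiftPoly_le F k

theorem card_le_card_forall_eval_shiftPoly_ne_zero_add [Fintype F] (k : ℕ) :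
    Fintype.card F ≤ (Finset.univ.filter fun x : F =>
      ∀ i : shiftSet F k, (shiftPoly F i).eval x ≠ 0).card + (k + 1) ^ 2 := by
  rw [← Finset.card_univ, ← Finset.card_filter_add_card_filter_not (s := Finset.univ)
    fun x : F => ∀ i : shiftSet F k, (shiftPoly F i).eval x ≠ 0]
  refine Nat.add_le_add_left ?_ _
  set roots : Finset F := Finset.univ.biUnion fun i : shiftSet F k => (shiftPoly F i).roots.toFinset
  have hroots : (Finset.univ.filter fun x : F =>
      ¬ ∀ i : shiftSet F k, (shiftPoly F i).eval x ≠ 0) ⊆ roots := fun x hx => by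
    obtain ⟨i, hi⟩ := not_forall_not.1 (Finset.mem_filter.1 hx).2
    exact Finset.mem_biUnion.2 ⟨i, Finset.mem_univ _, Multiset.mem_toFinset.2
      ((mem_roots (monic_shiftPoly F i).ne_zero).2 hi)⟩
  calc _ ≤ roots.card := Finset.card_le_card hroots
    _ ≤ ∑ i : shiftSet F k, (shiftPoly F i).roots.toFinset.card := Finset.card_biUnion_le
    _ ≤ ∑ i : shiftSet F k, (shiftPoly F i).natDegree := Finset.sum_le_sum fun i _ =>
        (Multiset.toFinset_card_le _).trans (card_roots' _)
    _ ≤ (k + 1) ^ 2 := sum_natDegree_shiftPoly_le F k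

end ShiftPoly

section CharacterExpansion

variable {F : Type*} [Field F]

theorem sum_prod_one_apply {ι X : Type*} [Fintype ι] [Fintype X] (u : ι → X → F) :
    ∑ x, ∏ i, (1 : MulChar F ℂ) (u i x) =
      (Finset.univ.filter fun x => ∀ i, u i x ≠ 0).card := by
  rw [← Finset.sum_boole]
  refine Finset.sum_congr rfl fun x _ => ?_
  split_ifs with hx
  · exact Finset.prod_eq_one fun i _ => MulChar.one_apply (isUnit_iff_ne_zero.2 (hx i))
  · obtain ⟨i, hi⟩ := not_forall_not.1 hx
    exact Finset.prod_eq_zero (Finset.mem_univ i) (by rw [hi]; exact MulChar.map_zero _)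

variable [Fintype F]

noncomputable instance mulCharComplexFintype : Fintype (MulChar F ℂ) := .ofFinite _

/-- The function `g` is a combination of multiplicative characters whose coefficients have
`ℓ¹`-norm at most `C`. -/
def HasCharBound (g : F → ℂ) (C : ℝ) : Prop :=
  ∃ a : MulChar F ℂ → ℂ, ∑ ψ, ‖a ψ‖ ≤ C ∧ ∀ y, g y = ∑ ψ, a ψ * ψ y

theorem HasCharBound.sub {g₁ g₂ : F → ℂ} {C₁ C₂ : ℝ} (h₁ : HasCharBound g₁ C₁)
    (h₂ : HasCharBound g₂ C₂) : HasCharBound (g₁ - g₂) (C₁ + C₂) := by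
  obtain ⟨a, ha, hga⟩ := h₁
  obtain ⟨b, hb, hgb⟩ := h₂
  refine ⟨a - b, ?_, fun y => ?_⟩
  · calc ∑ ψ, ‖a ψ - b ψ‖ ≤ ∑ ψ, (‖a ψ‖ + ‖b ψ‖) := Finset.sum_le_sum fun ψ _ => norm_sub_le _ _
      _ ≤ C₁ + C₂ := by rw [Finset.sum_add_distrib]; exact add_le_add ha hb
  · simp only [Pi.sub_apply, hga y, hgb y, sub_mul, Finset.sum_sub_distrib]

theorem HasCharBound.mul {g₁ g₂ : F → ℂ} {C₁ C₂ : ℝ} (h₁ : HasCharBound g₁ C₁)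
    (h₂ : HasCharBound g₂ C₂) : HasCharBound (g₁ * g₂) (C₁ * C₂) := by
  obtain ⟨a, ha, hga⟩ := h₁
  obtain ⟨b, hb, hgb⟩ := h₂
  refine ⟨fun ψ => ∑ φ, a φ * b (φ⁻¹ * ψ), ?_, fun y => ?_⟩
  · calc ∑ ψ, ‖∑ φ, a φ * b (φ⁻¹ * ψ)‖ ≤ ∑ ψ, ∑ φ, ‖a φ‖ * ‖b (φ⁻¹ * ψ)‖ :=
          Finset.sum_le_sum fun ψ _ => norm_sum_le_of_le _ fun φ _ => (norm_mul _ _).le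
      _ = ∑ φ, ‖a φ‖ * ∑ ψ, ‖b ψ‖ := by
          rw [Finset.sum_comm]
          refine Finset.sum_congr rfl fun φ _ => ?_
          rw [← Finset.mul_sum]
          exact congrArg _ (Equiv.sum_comp (Equiv.mulLeft φ⁻¹) fun ψ => ‖b ψ‖)
      _ = (∑ φ, ‖a φ‖) * ∑ ψ, ‖b ψ‖ := by rw [Finset.sum_mul]
      _ ≤ C₁ * C₂ := mul_le_mul ha hb (Finset.sum_nonneg fun _ _ => norm_nonneg _)
          ((Finset.sum_nonneg fun _ _ => norm_nonneg _).trans ha)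
  · simp only [Pi.mul_apply, hga y, hgb y, Finset.sum_mul]
    rw [Finset.sum_comm]
    refine Finset.sum_congr rfl fun φ _ => ?_
    rw [Finset.mul_sum]
    refine Fintype.sum_equiv (Equiv.mulLeft φ) _ _ fun ψ => ?_
    rw [Equiv.coe_mulLeft, inv_mul_cancel_left, MulChar.mul_apply]
    ring

theorem HasCharBound.mul_prod {κ : Type*} (s : Finset κ) {g : κ → F → ℂ} {C : κ → ℝ} {g₀ : F → ℂ}
    {C₀ : ℝ} (h₀ : HasCharBound g₀ C₀) (h : ∀ i ∈ s, HasCharBound (g i) (C i)) :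
    HasCharBound (g₀ * ∏ i ∈ s, g i) (C₀ * ∏ i ∈ s, C i) := by
  induction s using Finset.induction_on with
  | empty => simpa only [Finset.prod_empty, mul_one] using h₀
  | insert i s hi ih =>
    rw [Finset.prod_insert hi, Finset.prod_insert hi, mul_left_comm, mul_left_comm C₀]
    exact (h i (Finset.mem_insert_self i s)).mul
      (ih fun j hj => h j (Finset.mem_insert_of_mem hj))

theorem sum_eq_card_mul_of_eq_sum_mulChar {g : F → ℂ} {a : MulChar F ℂ → ℂ}
    (h : ∀ y, g y = ∑ ψ, a ψ * ψ y) : ∑ y, g y = Fintype.card Fˣ * a 1 := by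
  simp only [h]
  rw [Finset.sum_comm, Finset.sum_eq_single 1]
  · rw [← Finset.mul_sum, MulChar.sum_one_eq_card_units, mul_comm]
  · intro ψ _ hψ
    rw [← Finset.mul_sum, MulChar.sum_eq_zero_of_ne_one hψ, mul_zero]
  · exact fun h => absurd (Finset.mem_univ _) h

theorem sum_prod_eq_sum_mulChar {ι X : Type*} [Fintype ι] [Fintype X] (u : ι → X → F)
    {G : ι → F → ℂ} {a : ι → MulChar F ℂ → ℂ} (hG : ∀ i y, G i y = ∑ ψ, a i ψ * ψ y) :
    ∑ x, ∏ i, G i (u i x) =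
      ∑ ψ : ι → MulChar F ℂ, (∏ i, a i (ψ i)) * ∑ x, ∏ i, ψ i (u i x) := by
  simp only [hG, Finset.prod_univ_sum, Fintype.piFinset_univ, Finset.prod_mul_distrib,
    Finset.mul_sum]
  exact Finset.sum_comm

theorem norm_sum_prod_sub_card_mul_prod_le {ι X : Type*} [Fintype ι] [Fintype X]
    {u : ι → X → F} {W : ℝ} (hW : 0 ≤ W)
    (hu : ∀ χ : ι → MulChar F ℂ, χ ≠ 1 → ‖∑ x, ∏ i, χ i (u i x)‖ ≤ W)
    {G : ι → F → ℂ} {C : ι → ℝ} (hG : ∀ i, HasCharBound (G i) (C i)) :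
    ‖∑ x, ∏ i, G i (u i x) - (Finset.univ.filter fun x => ∀ i, u i x ≠ 0).card *
        ∏ i, ((∑ y, G i y) / Fintype.card Fˣ)‖ ≤ (∏ i, C i) * W := by
  choose a ha hGa using hG
  have hmean : ∀ i, (∑ y, G i y) / Fintype.card Fˣ = a i 1 := fun i => by
    rw [sum_eq_card_mul_of_eq_sum_mulChar (hGa i),
      mul_div_cancel_left₀ _ (Nat.cast_ne_zero.2 Fintype.card_ne_zero)]
  have hmain : ∑ x, ∏ i, G i (u i x) -
      (Finset.univ.filter fun x => ∀ i, u i x ≠ 0).card * ∏ i, a i 1 =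
        ∑ ψ ∈ Finset.univ.erase (1 : ι → MulChar F ℂ),
          (∏ i, a i (ψ i)) * ∑ x, ∏ i, ψ i (u i x) := by
    rw [sum_prod_eq_sum_mulChar u hGa, ← Finset.add_sum_erase _ _ (Finset.mem_univ 1)]
    simp only [Pi.one_apply]
    rw [sum_prod_one_apply, mul_comm (∏ i, a i 1), add_sub_cancel_left]
  simp only [hmean]
  calc _ ≤ ∑ ψ ∈ Finset.univ.erase (1 : ι → MulChar F ℂ), (∏ i, ‖a i (ψ i)‖) * W := by
        rw [hmain]
        refine norm_sum_le_of_le _ fun ψ hψ => ?_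
        rw [norm_mul, norm_prod]
        exact mul_le_mul_of_nonneg_left (hu ψ (Finset.ne_of_mem_erase hψ))
          (Finset.prod_nonneg fun _ _ => norm_nonneg _)
    _ ≤ ∑ ψ : ι → MulChar F ℂ, (∏ i, ‖a i (ψ i)‖) * W :=
        Finset.sum_le_sum_of_subset_of_nonneg (Finset.erase_subset _ _) fun _ _ _ =>
          mul_nonneg (Finset.prod_nonneg fun _ _ => norm_nonneg _) hW
    _ = (∏ i, ∑ ψ, ‖a i ψ‖) * W := by
        rw [← Finset.sum_mul, Finset.prod_univ_sum, Fintype.piFinset_univ]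
    _ ≤ (∏ i, C i) * W := by
        gcongr with i
        exact ha i

end CharacterExpansion

section SubgroupIndicator

variable {F : Type*} [Field F]

/-- The indicator function on `F` of a subgroup of `Fˣ`. -/
noncomputable def subgroupInd (H : Subgroup Fˣ) (y : F) : ℂ :=
  if y ∈ H.ofUnits then 1 else 0

theorem subgroupInd_coe (H : Subgroup Fˣ) (u : Fˣ) :
    subgroupInd H (u : F) = if u ∈ H then 1 else 0 := by
  simp only [subgroupInd, Subgroup.mem_ofUnits_iff, Units.val_inj, exists_eq_right]

variable [Fintype F]

theorem sum_subgroupInd (H : Subgroup Fˣ) : ∑ y, subgroupInd H y = Nat.card H := by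
  simp only [subgroupInd]
  rw [Finset.sum_boole, ← Fintype.card_subtype, ← Nat.card_eq_fintype_card]
  exact congrArg _ (Nat.card_congr H.ofUnitsEquivType.toEquiv)

theorem sum_mulChar_apply (a : F) :
    ∑ ψ : MulChar F ℂ, ψ a = if a = 1 then (Fintype.card Fˣ : ℂ) else 0 := by
  split_ifs with ha
  · have hcard := MulChar.card_eq_card_units_of_hasEnoughRootsOfUnity F ℂ
    simp only [ha, map_one, Finset.sum_const, Finset.card_univ, nsmul_eq_mul, mul_one]
    rw [← Nat.card_eq_fintype_card, hcard, Nat.card_eq_fintype_card]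
  · obtain ⟨χ, hχ⟩ := MulChar.exists_apply_ne_one_of_hasEnoughRootsOfUnity F ℂ ha
    refine eq_zero_of_mul_eq_self_left hχ ?_
    simp only [Finset.mul_sum, ← MulChar.mul_apply]
    exact Equiv.sum_comp (Equiv.mulLeft χ) fun ψ : MulChar F ℂ => ψ a

theorem sum_subgroup_mulChar_apply (H : Subgroup Fˣ) (ψ : MulChar F ℂ) :
    ∑ h : H, ψ ((h : Fˣ) : F) =
      if ∀ h : H, ψ ((h : Fˣ) : F) = 1 then (Fintype.card H : ℂ) else 0 := by
  split_ifs with hψ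
  · simp only [hψ, Finset.sum_const, Finset.card_univ, nsmul_eq_mul, mul_one]
  · obtain ⟨h₀, hh₀⟩ := not_forall.1 hψ
    refine eq_zero_of_mul_eq_self_left hh₀ ?_
    simp only [Finset.mul_sum, ← map_mul]
    exact Equiv.sum_comp (Equiv.mulLeft h₀) fun h : H => ψ ((h : Fˣ) : F)

theorem sum_subgroup_ite_mul_eq_one (H : Subgroup Fˣ) (y : F) :
    (∑ h : H, if ((h : Fˣ) : F) * y = 1 then (1 : ℂ) else 0) = subgroupInd H y := by
  by_cases hy : y = 0
  · subst hy
    have : (0 : F) ∉ H.ofUnits := fun h => (H.isUnit_of_mem_ofUnits h).ne_zero rfl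
    simp only [subgroupInd, mul_zero, zero_ne_one, if_false, Finset.sum_const_zero, if_neg this]
  lift y to Fˣ using IsUnit.mk0 y hy
  simp only [subgroupInd_coe, ← Units.val_mul, Units.val_eq_one, mul_eq_one_iff_eq_inv]
  rw [Finset.sum_boole]
  split_ifs with hyH
  · have : (Finset.univ.filter fun h : H => (h : Fˣ) = y⁻¹) = {⟨y⁻¹, H.inv_mem hyH⟩} := by
      ext h
      simp only [Finset.mem_filter, Finset.mem_univ, true_and, Finset.mem_singleton,
        Subtype.ext_iff]
    rw [this, Finset.card_singleton, Nat.cast_one]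
  · have : (Finset.univ.filter fun h : H => (h : Fˣ) = y⁻¹) = ∅ :=
      Finset.filter_eq_empty_iff.2 fun h _ hh => hyH (H.inv_mem_iff.1 (hh ▸ h.2))
    rw [this, Finset.card_empty, Nat.cast_zero]

theorem subgroupInd_eq_sum (H : Subgroup Fˣ) (y : F) :
    subgroupInd H y =
      ∑ ψ : MulChar F ℂ, ((Fintype.card Fˣ : ℂ)⁻¹ * ∑ h : H, ψ ((h : Fˣ) : F)) * ψ y := by
  have hc : (Fintype.card Fˣ : ℂ) ≠ 0 := Nat.cast_ne_zero.2 Fintype.card_ne_zero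
  simp only [mul_assoc, Finset.sum_mul]
  rw [← Finset.mul_sum, Finset.sum_comm]
  simp only [← map_mul, sum_mulChar_apply]
  rw [Finset.mul_sum, ← sum_subgroup_ite_mul_eq_one]
  refine Finset.sum_congr rfl fun h _ => ?_
  rw [mul_ite, inv_mul_cancel₀ hc, mul_zero]

/-- The coefficients are nonnegative, so their `ℓ¹`-norm is the value of the indicator at `1`. -/
theorem hasCharBound_subgroupInd (H : Subgroup Fˣ) : HasCharBound (subgroupInd H) 1 := by
  refine ⟨_, ?_, subgroupInd_eq_sum H⟩
  have hnorm (ψ : MulChar F ℂ) : ((‖(Fintype.card Fˣ : ℂ)⁻¹ * ∑ h : H, ψ ((h : Fˣ) : F)‖ : ℝ) : ℂ) =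
      (Fintype.card Fˣ : ℂ)⁻¹ * ∑ h : H, ψ ((h : Fˣ) : F) := by
    rw [sum_subgroup_mulChar_apply, norm_mul, norm_inv, Complex.norm_natCast]
    split_ifs
    · rw [Complex.norm_natCast]
      push_cast
      rfl
    · simp only [norm_zero, mul_zero, Complex.ofReal_zero]
  have hone := subgroupInd_eq_sum H 1
  rw [← Units.val_one, subgroupInd_coe, if_pos H.one_mem] at hone
  refine le_of_eq (Complex.ofReal_injective ?_)
  rw [Complex.ofReal_sum, Finset.sum_congr rfl fun ψ _ => hnorm ψ, Complex.ofReal_one, hone]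
  simp only [Units.val_one, map_one, mul_one]

end SubgroupIndicator

section PrimeFactors

theorem le_totient_mul_two_pow_card_primeFactors (d : ℕ) :
    d ≤ d.totient * 2 ^ d.primeFactors.card := by
  have hprod : (1 / 2 : ℚ) ^ d.primeFactors.card ≤ ∏ p ∈ d.primeFactors, (1 - (p : ℚ)⁻¹) := by
    rw [← Finset.prod_const]
    refine Finset.prod_le_prod (fun _ _ => by norm_num) fun p hp => ?_
    have hp2 : (2 : ℚ) ≤ p := by exact_mod_cast (Nat.prime_of_mem_primeFactors hp).two_le
    have : (p : ℚ)⁻¹ ≤ 1 / 2 := by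
      rw [one_div]
      exact inv_anti₀ two_pos hp2
    linarith
  have : (d : ℚ) ≤ d.totient * 2 ^ d.primeFactors.card := by
    rw [Nat.totient_eq_mul_prod_factors d]
    calc (d : ℚ) = d * (1 / 2) ^ d.primeFactors.card * 2 ^ d.primeFactors.card := by
          rw [mul_assoc, ← mul_pow, one_div_mul_cancel two_ne_zero, one_pow, mul_one]
      _ ≤ _ := by gcongr
  exact_mod_cast this

/-- The prime factors `p ≥ T` contribute at most their product, and fewer than `T` are smaller. -/
theorem pow_card_primeFactors_le {T : ℕ} (hT : 1 ≤ T) {d : ℕ} (hd : d ≠ 0) :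
    T ^ d.primeFactors.card ≤ T ^ T * d := by
  have hsmall : (d.primeFactors.filter (· < T)).card ≤ T :=
    (Finset.card_le_card fun _ hp => Finset.mem_range.2 (Finset.mem_filter.1 hp).2).trans
      (Finset.card_range T).le
  calc T ^ d.primeFactors.card = ∏ _ ∈ d.primeFactors, T := (Finset.prod_const T).symm
    _ ≤ ∏ p ∈ d.primeFactors, ((if p < T then T else 1) * p) := by
        refine Finset.prod_le_prod (fun _ _ => Nat.zero_le _) fun p hp => ?_
        have := (Nat.prime_of_mem_primeFactors hp).pos
        split_ifs with h
        · exact Nat.le_mul_of_pos_right _ this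
        · omega
    _ = T ^ (d.primeFactors.filter (· < T)).card * ∏ p ∈ d.primeFactors, p := by
        rw [Finset.prod_mul_distrib, Finset.prod_ite, Finset.prod_const, Finset.prod_const_one,
          mul_one]
    _ ≤ T ^ T * d := Nat.mul_le_mul (Nat.pow_le_pow_right hT hsmall)
        (Nat.le_of_dvd (Nat.pos_of_ne_zero hd) (Nat.prod_primeFactors_dvd d))

theorem exists_two_pow_card_primeFactors_le {ε : ℝ} (hε : 0 < ε) :
    ∃ K : ℝ, 1 ≤ K ∧ ∀ d : ℕ, d ≠ 0 → (2 : ℝ) ^ d.primeFactors.card ≤ K * (d : ℝ) ^ ε := by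
  obtain ⟨T, hT⟩ := exists_nat_ge ((2 : ℝ) ^ ε⁻¹)
  have hT1 : (1 : ℝ) ≤ T := (Real.one_le_rpow one_le_two (inv_pos.2 hε).le).trans hT
  have htwo : (2 : ℝ) ≤ (T : ℝ) ^ ε := by
    rwa [← Real.rpow_inv_le_iff_of_pos two_pos.le (Nat.cast_nonneg T) hε]
  refine ⟨((T : ℝ) ^ T) ^ ε, Real.one_le_rpow (one_le_pow₀ hT1) hε.le, fun d hd => ?_⟩
  calc (2 : ℝ) ^ d.primeFactors.card ≤ ((T : ℝ) ^ ε) ^ d.primeFactors.card := by gcongr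
    _ = ((T : ℝ) ^ d.primeFactors.card) ^ ε := by rw [Real.rpow_pow_comm (Nat.cast_nonneg T)]
    _ ≤ ((T : ℝ) ^ T * d) ^ ε := by
        gcongr
        exact_mod_cast pow_card_primeFactors_le (by exact_mod_cast hT1) hd
    _ = ((T : ℝ) ^ T) ^ ε * (d : ℝ) ^ ε := Real.mul_rpow (by positivity) (Nat.cast_nonneg d)

end PrimeFactors

section Generators

theorem orderOf_eq_iff_forall_pow_div_ne_one {M : Type*} [Monoid M] {x : M} {n : ℕ} (hn : 0 < n)
    (hx : x ^ n = 1) : orderOf x = n ↔ ∀ p ∈ n.primeFactors, x ^ (n / p) ≠ 1 := by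
  refine ⟨fun ho p hp => ?_, fun h => orderOf_eq_of_pow_and_pow_div_prime hn hx fun p hp hpn =>
    h p (Nat.mem_primeFactors.2 ⟨hp, hpn, hn.ne'⟩)⟩
  refine pow_ne_one_of_lt_orderOf ?_ (ho.symm ▸ Nat.div_lt_self hn ?_)
  · exact (Nat.div_pos (Nat.le_of_mem_primeFactors hp) (Nat.pos_of_mem_primeFactors hp)).ne'
  · exact (Nat.prime_of_mem_primeFactors hp).one_lt

variable {F : Type*} [Field F]

theorem subgroupInd_inf_ker_powMonoidHom (A : Subgroup Fˣ) (n : ℕ) {y : F} (hy : y ∈ A.ofUnits) :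
    subgroupInd (A ⊓ (powMonoidHom n).ker) y = if y ^ n = 1 then 1 else 0 := by
  obtain ⟨u, hu, rfl⟩ := hy
  simp only [Units.coeHom_apply, subgroupInd_coe, Subgroup.mem_inf, MonoidHom.mem_ker,
    powMonoidHom_apply, and_iff_right (show u ∈ A from hu), ← Units.val_pow_eq_pow_val,
    Units.val_eq_one]

/-- The indicator function on `F` of the set of generators of a cyclic subgroup of `Fˣ`. -/
noncomputable def genInd (A : Subgroup Fˣ) (y : F) : ℂ :=
  if y ∈ A.ofUnits ∧ orderOf y = Nat.card A then 1 else 0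

/-- An element of `A` is a generator iff it lies in none of the maximal subgroups of `A`, which are
the kernels of `x ↦ x ^ (card A / p)`. -/
theorem genInd_eq_prod [Finite F] (A : Subgroup Fˣ) :
    genInd A = subgroupInd A * ∏ p ∈ (Nat.card A).primeFactors,
      (subgroupInd A - subgroupInd (A ⊓ (powMonoidHom (Nat.card A / p)).ker)) := by
  funext y
  rw [Pi.mul_apply, Finset.prod_apply, genInd]
  by_cases hy : y ∈ A.ofUnits
  swap
  · rw [subgroupInd, if_neg hy, zero_mul, if_neg fun h => hy h.1]
  have hpow : y ^ Nat.card A = 1 := by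
    obtain ⟨u, hu, rfl⟩ := hy
    have hpow : (⟨u, hu⟩ : A) ^ Nat.card A = 1 := pow_card_eq_one'
    exact congrArg (fun a : A => ((a : Fˣ) : F)) hpow
  simp only [Pi.sub_apply, subgroupInd_inf_ker_powMonoidHom A _ hy, and_iff_right hy,
    orderOf_eq_iff_forall_pow_div_ne_one Nat.card_pos hpow]
  rw [subgroupInd, if_pos hy, one_mul]
  split_ifs with h
  · exact (Finset.prod_eq_one fun p hp => by rw [if_neg (h p hp), sub_zero]).symm
  · push Not at h
    obtain ⟨p, hp, hpy⟩ := h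
    exact (Finset.prod_eq_zero hp (by rw [if_pos hpy, sub_self])).symm

variable [Fintype F]

theorem hasCharBound_genInd (A : Subgroup Fˣ) :
    HasCharBound (genInd A) (2 ^ (Nat.card A).primeFactors.card) := by
  have := HasCharBound.mul_prod (Nat.card A).primeFactors (hasCharBound_subgroupInd A) fun p _ =>
    (hasCharBound_subgroupInd A).sub
      (hasCharBound_subgroupInd (A ⊓ (powMonoidHom (Nat.card A / p)).ker))
  rwa [← genInd_eq_prod, Finset.prod_const, one_mul, one_add_one_eq_two] at this

theorem sum_genInd (A : Subgroup Fˣ) : ∑ y, genInd A y = (Nat.card A).totient := by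
  have hgen : (Finset.univ.filter fun a : A => orderOf a = Nat.card A).card =
      (Nat.card A).totient := by
    rw [Nat.card_eq_fintype_card]
    exact IsCyclic.card_orderOf_eq_totient dvd_rfl
  simp only [genInd]
  rw [Finset.sum_boole, ← hgen]
  congr 1
  symm
  refine Finset.card_bij (fun h _ => ((h : Fˣ) : F)) (fun h hh => ?_) (fun a _ b _ h => ?_)
    fun y hy => ?_
  · refine Finset.mem_filter.2 ⟨Finset.mem_univ _, ⟨h, h.2, rfl⟩, ?_⟩
    rw [orderOf_units, Subgroup.orderOf_coe]
    exact (Finset.mem_filter.1 hh).2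
  · exact Subtype.ext (Units.ext h)
  · obtain ⟨⟨h, hh, rfl⟩, ho⟩ := (Finset.mem_filter.1 hy).2
    rw [Units.coeHom_apply, orderOf_units] at ho
    exact ⟨⟨h, hh⟩, Finset.mem_filter.2 ⟨Finset.mem_univ _, by rwa [Subgroup.orderOf_mk]⟩, rfl⟩

end Generators

section Existence

open Polynomial

variable {F : Type*} [Field F]

/-- The condition imposed on the value of `shiftPoly F j`: to be a generator of `A` for `j = 0`, and
an element of `A` for `j ≠ 0`. -/
noncomputable def shiftInd (A : Subgroup Fˣ) (j : ℕ) : F → ℂ :=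
  if j = 0 then genInd A else subgroupInd A

theorem exists_generator_of_prod_shiftInd_ne_zero {A : Subgroup Fˣ} {k : ℕ} {x : F}
    (hx : ∏ i : shiftSet F k, shiftInd A i ((shiftPoly F i).eval x) ≠ 0) :
    ∃ g ∈ A, orderOf g = Nat.card A ∧
      ∀ j, 1 ≤ j → j ≤ k → (j : F) ≠ 0 → 1 + (g : F) ^ j ∈ A.ofUnits := by
  have hne (j : ℕ) (hjk : j ≤ k) (hj : j = 0 ∨ (j : F) ≠ 0) :
      shiftInd A j ((shiftPoly F j).eval x) ≠ 0 := Finset.prod_ne_zero_iff.1 hx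
    ⟨j, Finset.mem_filter.2 ⟨Finset.mem_range.2 (Nat.lt_succ_of_le hjk), hj⟩⟩ (Finset.mem_univ _)
  have hgen := hne 0 k.zero_le (Or.inl rfl)
  rw [shiftInd, if_pos rfl, shiftPoly, if_pos rfl, eval_X, genInd, ite_ne_right_iff] at hgen
  obtain ⟨⟨⟨g, hg, rfl⟩, hord⟩, -⟩ := hgen
  rw [Units.coeHom_apply, orderOf_units] at hord
  refine ⟨g, hg, hord, fun j hj hjk hjF => ?_⟩
  have hsum := hne j hjk (Or.inr hjF)
  have hj0 : j ≠ 0 := Nat.one_le_iff_ne_zero.1 hj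
  rw [shiftInd, if_neg hj0, shiftPoly, if_neg hj0, subgroupInd, ite_ne_right_iff, eval_add,
    eval_pow, eval_X, eval_one, add_comm] at hsum
  exact hsum.1

theorem prod_shiftSet_ite (k : ℕ) {R : Type*} [CommMonoid R] (a b : R) :
    ∏ i : shiftSet F k, (if (i : ℕ) = 0 then a else b) = a * b ^ ((shiftSet F k).card - 1) := by
  have hzero : 0 ∈ shiftSet F k :=
    Finset.mem_filter.2 ⟨Finset.mem_range.2 k.succ_pos, Or.inl rfl⟩
  rw [Finset.prod_coe_sort (shiftSet F k) fun i => if i = 0 then a else b,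
    ← Finset.mul_prod_erase _ _ hzero, if_pos rfl,
    Finset.prod_congr rfl fun i hi => if_neg (Finset.ne_of_mem_erase hi), Finset.prod_const,
    Finset.card_erase_of_mem hzero]

/-- Exponents divisible by the characteristic `p` come for free: `1 + g ^ (p * i)` is the `p`-th
power of `1 + g ^ i`. -/
theorem one_add_pow_mem_ofUnits [Finite F] {k : ℕ} {A : Subgroup Fˣ} {g : F}
    (h : ∀ j, 1 ≤ j → j ≤ k → (j : F) ≠ 0 → 1 + g ^ j ∈ A.ofUnits) (j : ℕ) (hj : 1 ≤ j)
    (hjk : j ≤ k) : 1 + g ^ j ∈ A.ofUnits := by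
  induction j using Nat.strong_induction_on with
  | _ j ih =>
    by_cases hjF : (j : F) = 0
    · have hp : Fact (ringChar F).Prime := ⟨CharP.char_is_prime F _⟩
      obtain ⟨i, rfl⟩ := (ringChar.spec F j).1 hjF
      have hi : 0 < i := Nat.pos_of_mul_pos_left hj
      have hlt : i < ringChar F * i := lt_mul_of_one_lt_left hi hp.out.one_lt
      rw [mul_comm, pow_mul, ← one_pow (ringChar F), ← add_pow_char]
      exact pow_mem (ih i hlt hi (hlt.le.trans hjk)) _
    · exact h j hj hjk hjF

theorem exists_zmod_equiv_add_mem [Finite F] {k : ℕ} {A : Subgroup Fˣ} {g : Fˣ} (hg : g ∈ A)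
    (ho : orderOf g = Nat.card A)
    (h : ∀ j, 1 ≤ j → j ≤ k → 1 + (g : F) ^ j ∈ A.ofUnits) :
    ∃ a : ZMod (Nat.card A) ≃ A, ∀ (i : ZMod (Nat.card A)) (j : ℕ), 1 ≤ j → j ≤ k →
      ∃ b ∈ A, ((a i : Fˣ) : F) + ((a (i + (j : ZMod (Nat.card A))) : Fˣ) : F) =
        ((b : Fˣ) : F) := by
  have hd : NeZero (Nat.card A) := ⟨Nat.card_pos.ne'⟩
  let f : ZMod (Nat.card A) → A := fun i => ⟨g ^ i.val, A.pow_mem hg _⟩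
  have hf : Function.Injective f := fun i j hij =>
    ZMod.val_injective _ (pow_injOn_Iio_orderOf (x := g) (ho.symm ▸ ZMod.val_lt i)
      (ho.symm ▸ ZMod.val_lt j) (congrArg Subtype.val hij))
  have hb : Function.Bijective f :=
    (Nat.bijective_iff_injective_and_card f).2 ⟨hf, Nat.card_zmod _⟩
  refine ⟨Equiv.ofBijective f hb, fun i j hj hjk => ?_⟩
  obtain ⟨b, hbA, hb'⟩ := h j hj hjk
  refine ⟨g ^ i.val * b, A.mul_mem (A.pow_mem hg _) hbA, ?_⟩
  have hadd : g ^ (i + (j : ZMod (Nat.card A))).val = g ^ i.val * g ^ j := by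
    rw [← pow_add, ZMod.val_add, ZMod.val_natCast, Nat.add_mod_mod,
      ← pow_mod_orderOf g (i.val + j), ho]
  rw [Units.coeHom_apply] at hb'
  simp only [Equiv.ofBijective_apply, f, hadd, Units.val_mul, Units.val_pow_eq_pow_val, hb']
  rw [mul_add, mul_one]

variable [Fintype F]

theorem hasCharBound_shiftInd (A : Subgroup Fˣ) (j : ℕ) :
    HasCharBound (shiftInd A j) (if j = 0 then 2 ^ (Nat.card A).primeFactors.card else 1) := by
  rw [shiftInd]
  split_ifs
  · exact hasCharBound_genInd A
  · exact hasCharBound_subgroupInd A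

theorem sum_shiftInd (A : Subgroup Fˣ) (j : ℕ) :
    ∑ y, shiftInd A j y = if j = 0 then ((Nat.card A).totient : ℂ) else (Nat.card A : ℂ) := by
  rw [shiftInd]
  split_ifs
  · exact sum_genInd A
  · exact sum_subgroupInd A

theorem exists_generator_of_lt {k : ℕ} {A : Subgroup Fˣ}
    (h : 2 ^ (Nat.card A).primeFactors.card * (((k + 1) ^ 2 : ℕ) * √(Fintype.card F : ℝ)) <
      ((Fintype.card F : ℝ) - ((k + 1) ^ 2 : ℕ)) *
        (((Nat.card A).totient : ℝ) / Fintype.card Fˣ * ((Nat.card A : ℝ) / Fintype.card Fˣ) ^ k)) :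
    ∃ g ∈ A, orderOf g = Nat.card A ∧
      ∀ j, 1 ≤ j → j ≤ k → (j : F) ≠ 0 → 1 + (g : F) ^ j ∈ A.ofUnits := by
  set r : ℝ := (Nat.card A : ℝ) / Fintype.card Fˣ with hr
  set t : ℝ := ((Nat.card A).totient : ℝ) / Fintype.card Fˣ with ht
  set n : ℕ := (Finset.univ.filter fun x : F =>
    ∀ i : shiftSet F k, (shiftPoly F i).eval x ≠ 0).card with hn
  have hmean : ∏ i : shiftSet F k, ((∑ y, shiftInd A i y) / (Fintype.card Fˣ : ℂ)) =
      ((t * r ^ ((shiftSet F k).card - 1) : ℝ) : ℂ) := by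
    simp only [sum_shiftInd, ite_div, prod_shiftSet_ite, hr, ht]
    push_cast
    rfl
  have hweil := norm_sum_prod_sub_card_mul_prod_le (u := fun (i : shiftSet F k) x =>
    (shiftPoly F i).eval x) (by positivity) (fun _ => norm_sum_prod_shiftPoly_le)
    fun i => hasCharBound_shiftInd A i
  rw [hmean, ← hn, prod_shiftSet_ite, one_pow, mul_one] at hweil
  by_contra hno
  rw [Finset.sum_eq_zero fun x _ => of_not_not fun hx =>
      hno (exists_generator_of_prod_shiftInd_ne_zero hx), zero_sub, norm_neg, norm_mul,
    Complex.norm_natCast, Complex.norm_real, Real.norm_of_nonneg (by positivity)] at hweil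
  have hn' : (Fintype.card F : ℝ) - ((k + 1) ^ 2 : ℕ) ≤ n := by
    rw [sub_le_iff_le_add]
    exact_mod_cast card_le_card_forall_eval_shiftPoly_ne_zero_add (F := F) k
  have hr1 : r ≤ 1 := div_le_one_of_le₀ (by
    rw [← Nat.card_eq_fintype_card]
    exact_mod_cast Subgroup.card_le_card_group A) (Nat.cast_nonneg _)
  have hcard : (shiftSet F k).card - 1 ≤ k := Nat.sub_le_of_le_add
    ((Finset.card_filter_le _ _).trans (Finset.card_range _).le)
  have hpow : r ^ k ≤ r ^ ((shiftSet F k).card - 1) :=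
    pow_le_pow_of_le_one (by positivity) hr1 hcard
  have : ((Fintype.card F : ℝ) - ((k + 1) ^ 2 : ℕ)) * (t * r ^ k) ≤
      n * (t * r ^ ((shiftSet F k).card - 1)) := by gcongr
  linarith

end Existence

section MainTerm

theorem mul_rpow_le_mul_div_pow {q d c δ : ℝ} (k : ℕ) (hq : 0 < q) (hc : 1 ≤ c)
    (hd : c * q ^ δ ≤ d) : c * q ^ ((k + 1) * δ - k) ≤ q * (d / q) ^ (k + 1) := by
  have hdq : c * q ^ (δ - 1) ≤ d / q := by
    rwa [le_div_iff₀ hq, mul_assoc, ← Real.rpow_add_one hq.ne', sub_add_cancel]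
  calc c * q ^ ((k + 1) * δ - k) ≤ c ^ (k + 1) * q ^ ((k + 1) * δ - k) := by
        gcongr
        exact le_self_pow₀ hc k.succ_ne_zero
    _ = q * (c * q ^ (δ - 1)) ^ (k + 1) := by
        rw [mul_pow, ← Real.rpow_mul_natCast hq.le, mul_left_comm, mul_comm q,
          ← Real.rpow_add_one hq.ne']
        congr 2
        push_cast
        ring
    _ ≤ q * (d / q) ^ (k + 1) := by gcongr

theorem weil_error_lt_main_term {k : ℕ} {q d K c φ w W δ : ℝ} (hq : 1 ≤ q) (hK : 1 ≤ K)
    (hW : 1 ≤ W) (hc : 2 * K * W < c) (hδ : 0 ≤ δ) (hw1 : 1 ≤ w)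
    (hw : w ^ 2 ≤ K * q ^ ((k + 1) * δ - k - 1 / 2)) (hdq : d ≤ q - 1) (hφ : d ≤ φ * w)
    (hd : c * q ^ δ ≤ d) : w * (W * √q) < (q - W) * (φ / (q - 1) * (d / (q - 1)) ^ k) := by
  have hq0 : 0 < q := by linarith
  have hw0 : 0 < w := by linarith
  have hWK : W ≤ K * W := le_mul_of_one_le_left (by linarith) hK
  have hc1 : 1 ≤ c := by linarith
  have hcd : c ≤ d := (le_mul_of_one_le_right (by linarith) (Real.one_le_rpow hq hδ)).trans hd
  have hq1 : 0 < q - 1 := by linarith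
  have hd0 : 0 < d := by linarith
  have hqW : q / 2 ≤ q - W := by linarith
  have hr : d / q ≤ d / (q - 1) := by
    gcongr
    linarith
  have hφ' : d / q / w ≤ φ / (q - 1) := by
    rw [div_le_iff₀ hw0, div_mul_eq_mul_div]
    exact hr.trans (by gcongr)
  calc w * (W * √q) = w ^ 2 * (W * √q) / w := by field_simp
    _ ≤ K * q ^ ((k + 1) * δ - k - 1 / 2) * (W * √q) / w := by gcongr
    _ = K * W * q ^ ((k + 1) * δ - k) / w := by
        rw [mul_mul_mul_comm, Real.sqrt_eq_rpow, ← Real.rpow_add hq0, sub_add_cancel]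
    _ < c / 2 * q ^ ((k + 1) * δ - k) / w := by
        gcongr
        linarith
    _ = c * q ^ ((k + 1) * δ - k) / 2 / w := by ring
    _ ≤ q * (d / q) ^ (k + 1) / 2 / w := by
        gcongr ?_ / 2 / w
        exact mul_rpow_le_mul_div_pow k hq0 hc1 hd
    _ = q / 2 * (d / q / w * (d / q) ^ k) := by ring
    _ ≤ (q - W) * (φ / (q - 1) * (d / (q - 1)) ^ k) := by
        have : 0 ≤ q - W := by linarith
        gcongr
        exact (by positivity : 0 ≤ d / q / w).trans hφ'

end MainTerm

theorem stmt14_general (k : ℕ) {δ : ℝ} (hδ : (2 * k + 1) / (2 * k + 2) < δ) :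
    ∃ c : ℝ, 0 < c ∧ ∀ (F : Type*) [Field F] [Fintype F] (A : Subgroup Fˣ),
      c * (Fintype.card F : ℝ) ^ δ ≤ Nat.card A →
      ∃ a : ZMod (Nat.card A) ≃ A, ∀ (i : ZMod (Nat.card A)) (j : ℕ), 1 ≤ j → j ≤ k →
        ∃ b ∈ A, ((a i : Fˣ) : F) + ((a (i + (j : ZMod (Nat.card A))) : Fˣ) : F) =
          ((b : Fˣ) : F) := by
  have hδ0 : 0 ≤ δ := (by positivity : (0 : ℝ) ≤ (2 * k + 1) / (2 * k + 2)).trans hδ.le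
  have hε : 0 < ((k + 1) * δ - k - 1 / 2) / 2 := by
    rw [div_lt_iff₀ (by positivity)] at hδ
    linarith
  set ε := ((k + 1) * δ - k - 1 / 2) / 2 with hεdef
  obtain ⟨K, hK, hKd⟩ := exists_two_pow_card_primeFactors_le hε
  have hW : (1 : ℝ) ≤ ((k + 1) ^ 2 : ℕ) := by exact_mod_cast Nat.one_le_pow _ _ k.succ_pos
  refine ⟨2 * K ^ 2 * ((k + 1) ^ 2 : ℕ) + 1, by positivity, fun F _ _ A hd => ?_⟩
  have hq : (1 : ℝ) ≤ Fintype.card F := by exact_mod_cast Fintype.card_pos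
  have hu : (Fintype.card Fˣ : ℝ) = Fintype.card F - 1 := by
    rw [Fintype.card_units, Nat.cast_sub Fintype.card_pos, Nat.cast_one]
  have hdq : (Nat.card A : ℝ) ≤ Fintype.card F - 1 := by
    rw [← hu, ← Nat.card_eq_fintype_card (α := Fˣ)]
    exact_mod_cast Subgroup.card_le_card_group A
  have hw : ((2 : ℝ) ^ (Nat.card A).primeFactors.card) ^ 2 ≤
      K ^ 2 * (Fintype.card F : ℝ) ^ ((k + 1) * δ - k - 1 / 2) := by
    rw [show (k + 1) * δ - k - 1 / 2 = ε * (2 : ℕ) by rw [hεdef]; push_cast; ring,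
      Real.rpow_mul_natCast (Nat.cast_nonneg _), ← mul_pow]
    have : (Nat.card A : ℝ) ≤ Fintype.card F := by linarith
    gcongr
    exact (hKd _ Nat.card_pos.ne').trans (by gcongr)
  obtain ⟨g, hg, hord, hgA⟩ := exists_generator_of_lt (k := k) (A := A) (by
    rw [hu]
    exact weil_error_lt_main_term hq (one_le_pow₀ hK) hW (lt_add_one _) hδ0
      (one_le_pow₀ one_le_two) hw hdq
      (by exact_mod_cast le_totient_mul_two_pow_card_primeFactors (Nat.card A)) hd)
  exact exists_zmod_equiv_add_mem hg hord (one_add_pow_mem_ofUnits hgA)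

/-- additive structures in multiplicative subgroups. -/
theorem stmt14 (k : ℕ) (hk : 2 ≤ k) :
    ∃ c : ℝ, 0 < c ∧
      ∀ (F : Type) [Field F] [Fintype F] (A : Subgroup Fˣ) (d : ℕ),
        Nat.card A = d →
        (k = 2 → c * (Fintype.card F : ℝ) ^ ((6 : ℝ) / 7) ≤ (d : ℝ)) →
        (3 ≤ k → c * (Fintype.card F : ℝ) ^ ((3 * (k : ℝ) + 1) / (3 * (k : ℝ) + 2)) ≤ (d : ℝ)) →
        ∃ a : ZMod d ≃ A, ∀ (i : ZMod d) (j : ℕ), 1 ≤ j → j ≤ k →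
          ∃ b ∈ A, ((a i : Fˣ) : F) + ((a (i + (j : ZMod d)) : Fˣ) : F) = ((b : Fˣ) : F) := by
  rcases hk.eq_or_lt with rfl | hk3
  · obtain ⟨c, hc, hgen⟩ := stmt14_general 2 (δ := 6 / 7) (by norm_num)
    exact ⟨c, hc, fun F _ _ A d hd h2 _ => by subst hd; exact hgen F A (h2 rfl)⟩
  · have hk' : (3 : ℝ) ≤ k := by exact_mod_cast hk3
    obtain ⟨c, hc, hgen⟩ := stmt14_general k (δ := (3 * k + 1) / (3 * k + 2)) (by
      rw [div_lt_div_iff₀ (by positivity) (by positivity)]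
      nlinarith)
    exact ⟨c, hc, fun F _ _ A d hd _ h3 => by subst hd; exact hgen F A (h3 hk3)⟩
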